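/- Let G be a finite subgroup of GL_n(ℂ) such that every group homomorphism G → ℂ^× is trivial (G has no non-trivial characters). Then M_G ≤ 4n², i.e. there exists a nonzero homogeneous G-invariant polynomial in ℂ[x_1,…,x_n] of degree d with 0 < d ≤ 4n². -/

import Mathlib

open MvPolynomial Matrix

/-- The action of `g ∈ GL_n(ℂ)` on polynomials: `(g · f)(v) = f(g⁻¹ v)`. -/
noncomputable def glAct {n : ℕ} (g : GL (Fin n) ℂ)
    (f : MvPolynomial (Fin n) ℂ) : MvPolynomial (Fin n) ℂ :=
  aeval (fun i => ∑ j, ((g⁻¹ : GL (Fin n) ℂ) : Matrix (Fin n) (Fin n) ℂ) i j • X j) f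



namespace Thompson

lemma exists_val (p : ℕ) (hp : p.Prime) : ∃ O : ValuationSubring ℂ, O.valuation (p : ℂ) < 1 := by
  let A : Subring ℂ := (Int.castRingHom ℂ).range
  let pA : A := ⟨(p : ℂ), ⟨(p : ℤ), by simp⟩⟩
  have hI : Ideal.span {pA} ≠ ⊤ := by
    intro h
    rw [Ideal.eq_top_iff_one, Ideal.mem_span_singleton] at h
    obtain ⟨⟨_, m, rfl⟩, hm⟩ := h
    have h1 : (1 : ℂ) = p * (m : ℂ) := by
      have := congrArg Subtype.val hm
      simpa [pA] using this
    have h2 : (1 : ℤ) = p * m := by exact_mod_cast h1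
    have h3 : (p : ℤ) ∣ 1 := ⟨m, h2⟩
    have h4 : p ∣ 1 := by exact_mod_cast h3
    exact hp.one_lt.ne' (Nat.dvd_one.mp h4)
  obtain ⟨B, -, hB⟩ := Ideal.image_subset_nonunits_valuationSubring _ hI
  refine ⟨B, ?_⟩
  rw [← ValuationSubring.mem_nonunits_iff]
  exact hB ⟨pA, Ideal.subset_span rfl, rfl⟩

variable (O : ValuationSubring ℂ)

lemma val_int_le (m : ℤ) : O.valuation (m : ℂ) ≤ 1 := by
  rw [ValuationSubring.valuation_le_one_iff]
  exact intCast_mem O m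

lemma val_nat_le (m : ℕ) : O.valuation (m : ℂ) ≤ 1 := by
  rw [ValuationSubring.valuation_le_one_iff]
  exact natCast_mem O m

lemma val_nat_coprime {p m : ℕ} (hp : O.valuation (p : ℂ) < 1) (h : Nat.Coprime m p) :
    O.valuation (m : ℂ) = 1 := by
  refine le_antisymm (val_nat_le O m) ?_
  by_contra hlt
  push Not at hlt
  have := Nat.gcd_eq_gcd_ab m p
  rw [h] at this
  have h1 : (1 : ℂ) = m * (Nat.gcdA m p : ℤ) + p * (Nat.gcdB m p : ℤ) := by exact_mod_cast this
  have h2 : O.valuation (1 : ℂ) < 1 := by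
    rw [h1]
    refine Valuation.map_add_lt _ ?_ ?_
    · rw [map_mul]; exact mul_lt_one_of_lt_of_le hlt (val_int_le O _)
    · rw [map_mul]; exact mul_lt_one_of_lt_of_le hp (val_int_le O _)
  simp at h2

lemma val_root {z : ℂ} {m : ℕ} (hm : m ≠ 0) (h : z ^ m = 1) : O.valuation z = 1 := by
  have : O.valuation z ^ m = 1 := by rw [← map_pow, h, map_one]
  exact (pow_eq_one_iff.mp this).resolve_right hm

lemma val_one_sub_le {ξ : ℂ} (h : O.valuation ξ = 1) (i : ℕ) :
    O.valuation (1 - ξ ^ i) ≤ O.valuation (1 - ξ) := by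
  have : 1 - ξ ^ i = (1 - ξ) * ∑ j ∈ Finset.range i, ξ ^ j := by
    rw [mul_comm, geom_sum_mul_neg]
  rw [this, map_mul]
  refine mul_le_of_le_one_right' ?_
  refine Valuation.map_sum_le _ ?_
  intro j _
  rw [map_pow, h, one_pow]

lemma val_one_sub_eq {p : ℕ} (hp : p.Prime) {ξ ξ' : ℂ} (h : IsPrimitiveRoot ξ p)
    (h' : IsPrimitiveRoot ξ' p) : O.valuation (1 - ξ') = O.valuation (1 - ξ) := by
  have v1 := val_root O hp.ne_zero h.pow_eq_one
  have v2 := val_root O hp.ne_zero h'.pow_eq_one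
  have : NeZero p := ⟨hp.ne_zero⟩
  apply le_antisymm
  · obtain ⟨i, -, rfl⟩ := h.eq_pow_of_pow_eq_one h'.pow_eq_one
    exact val_one_sub_le O v1 i
  · obtain ⟨i, -, rfl⟩ := h'.eq_pow_of_pow_eq_one h.pow_eq_one
    exact val_one_sub_le O v2 i

lemma val_pi {p : ℕ} (hp : p.Prime) {ζ : ℂ} (h : IsPrimitiveRoot ζ p) :
    O.valuation (1 - ζ) ^ (p - 1) = O.valuation (p : ℂ) := by
  obtain ⟨n, rfl⟩ : ∃ n, p = n + 1 := ⟨p - 1, by have := hp.pos; omega⟩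
  have := h.prod_one_sub_pow_eq_order
  have h2 : ((n + 1 : ℕ) : ℂ) = ∏ k ∈ Finset.range n, (1 - ζ ^ (k + 1)) := by
    rw [this]; push_cast; rfl
  rw [h2, map_prod]
  rw [Finset.prod_congr rfl (g := fun _ => O.valuation (1 - ζ))]
  · simp
  · intro k hk
    refine val_one_sub_eq O hp h (h.pow_of_coprime _ ?_)
    have := Finset.mem_range.mp hk
    exact (Nat.coprime_of_lt_prime (by omega) (by omega) hp).symm

end Thompson


namespace Thompson

section Idem
variable {P : Type*} [CommGroup P] [Fintype P] {U : Type*} [AddCommGroup U] [Module ℂ U]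

noncomputable def idem (σ : P →* Module.End ℂ U) (a : P →* ℂˣ) : Module.End ℂ U :=
  (Fintype.card P : ℂ)⁻¹ • ∑ x, ((a x : ℂ)⁻¹) • σ x

variable (σ : P →* Module.End ℂ U) (a b : P →* ℂˣ)

lemma card_ne : (Fintype.card P : ℂ) ≠ 0 := by
  exact_mod_cast Fintype.card_ne_zero

lemma sig_mul_idem (x : P) : σ x * idem σ a = (a x : ℂ) • idem σ a := by
  unfold idem
  rw [mul_smul_comm, smul_comm]
  congr 1
  rw [Finset.mul_sum, Finset.smul_sum]
  refine Fintype.sum_equiv (Equiv.mulLeft x) _ _ ?_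
  intro y
  simp only [Equiv.coe_mulLeft, map_mul, Units.val_mul, mul_smul_comm, smul_smul, mul_inv]
  rw [mul_inv_cancel_left₀ (a x).ne_zero]

lemma idem_mul_sig (x : P) : idem σ a * σ x = (a x : ℂ) • idem σ a := by
  rw [← sig_mul_idem]
  unfold idem
  rw [mul_smul_comm, smul_mul_assoc, Finset.mul_sum, Finset.sum_mul]
  congr 1
  refine Finset.sum_congr rfl fun y _ => ?_
  rw [smul_mul_assoc, mul_smul_comm, ← map_mul, ← map_mul, mul_comm]

lemma idem_of_fix (T : Module.End ℂ U) (h : ∀ x, σ x * T = (a x : ℂ) • T) : idem σ a * T = T := by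
  unfold idem
  rw [smul_mul_assoc, Finset.sum_mul]
  have : ∀ x ∈ Finset.univ, ((a x : ℂ)⁻¹ • σ x) * T = T := by
    intro x _
    rw [smul_mul_assoc, h, smul_smul, inv_mul_cancel₀ (a x).ne_zero, one_smul]
  rw [Finset.sum_congr rfl this, Finset.sum_const, Finset.card_univ, ← Nat.cast_smul_eq_nsmul ℂ,
    smul_smul, inv_mul_cancel₀ card_ne, one_smul]

lemma idem_of_fix_apply (u : U) (h : ∀ x, σ x u = (a x : ℂ) • u) : idem σ a u = u := by
  have : idem σ a u = (Fintype.card P : ℂ)⁻¹ • ∑ x, ((a x : ℂ)⁻¹) • σ x u := by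
    simp [idem]
  rw [this]
  have : ∀ x ∈ Finset.univ, ((a x : ℂ)⁻¹ • σ x u) = u := by
    intro x _
    rw [h, smul_smul, inv_mul_cancel₀ (a x).ne_zero, one_smul]
  rw [Finset.sum_congr rfl this, Finset.sum_const, Finset.card_univ, ← Nat.cast_smul_eq_nsmul ℂ,
    smul_smul, inv_mul_cancel₀ card_ne, one_smul]

lemma idem_sq : idem σ a * idem σ a = idem σ a :=
  idem_of_fix σ a _ (sig_mul_idem σ a)

lemma idem_mul_ne (h : a ≠ b) : idem σ a * idem σ b = 0 := by
  obtain ⟨x, hx⟩ : ∃ x, a x ≠ b x := by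
    by_contra hc; push Not at hc; exact h (MonoidHom.ext hc)
  have h1 : (a x : ℂ) • (idem σ a * idem σ b) = (b x : ℂ) • (idem σ a * idem σ b) := by
    rw [← smul_mul_assoc, ← idem_mul_sig, mul_assoc, sig_mul_idem, mul_smul_comm]
  rw [← sub_eq_zero, ← sub_smul] at h1
  rcases smul_eq_zero.mp h1 with h2 | h2
  · exact absurd (Units.ext (sub_eq_zero.mp h2)) hx
  · exact h2

instance finChar : Finite (P →* ℂˣ) :=
  Finite.of_equiv P
    (CommGroup.monoidHom_mulEquiv_of_hasEnoughRootsOfUnity P ℂ).some.toEquiv.symm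

noncomputable instance fintypeChar : Fintype (P →* ℂˣ) := Fintype.ofFinite _

lemma sum_idem : ∑ a, idem σ a = 1 := by
  classical
  unfold idem
  rw [← Finset.smul_sum, Finset.sum_comm]
  have key : ∀ x : P, ∑ a : P →* ℂˣ, ((a x : ℂ)⁻¹) • σ x =
      if x = 1 then (Fintype.card P : ℂ) • (1 : Module.End ℂ U) else 0 := by
    intro x
    rw [← Finset.sum_smul]
    split_ifs with h
    · subst h
      simp only [map_one, Units.val_one, inv_one, Finset.sum_const, Finset.card_univ]
      congr 1
      rw [← Nat.card_eq_fintype_card, CommGroup.card_monoidHom_of_hasEnoughRootsOfUnity,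
        Nat.card_eq_fintype_card]
      simp
    · obtain ⟨φ, hφ⟩ := CommGroup.exists_apply_ne_one_of_hasEnoughRootsOfUnity P ℂ h
      have h1 : ∑ a : P →* ℂˣ, ((a x : ℂ)⁻¹) = ((φ x : ℂ)⁻¹) * ∑ a : P →* ℂˣ, ((a x : ℂ)⁻¹) := by
        rw [Finset.mul_sum]
        symm
        refine Fintype.sum_equiv (Equiv.mulLeft φ) _ _ ?_
        intro a
        simp [mul_comm]
      have h2 : (1 - (φ x : ℂ)⁻¹) * ∑ a : P →* ℂˣ, ((a x : ℂ)⁻¹) = 0 := by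
        rw [sub_mul, one_mul, ← h1, sub_self]
      rcases mul_eq_zero.mp h2 with h3 | h3
      · exfalso
        apply hφ
        rw [sub_eq_zero, eq_comm, inv_eq_one] at h3
        exact Units.ext h3
      · rw [h3, zero_smul]
  rw [Finset.sum_congr rfl fun x _ => key x, Finset.sum_ite_eq' ]
  simp [smul_smul, inv_mul_cancel₀ (card_ne (P := P))]

lemma idem_conj (T : Module.End ℂ U) (τ : P ≃* P) (h : ∀ x, T * σ x = σ (τ x) * T) :
    T * idem σ (a.comp τ.toMonoidHom) = idem σ a * T := by
  unfold idem
  rw [mul_smul_comm, smul_mul_assoc, Finset.mul_sum, Finset.sum_mul]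
  congr 1
  refine Fintype.sum_equiv τ.toEquiv _ _ ?_
  intro x
  simp [h]

lemma sig_eq_sum (x : P) : σ x = ∑ a, (a x : ℂ) • idem σ a := by
  conv_lhs => rw [← mul_one (σ x), ← sum_idem σ, Finset.mul_sum]
  simp only [sig_mul_idem]

end Idem

end Thompson


namespace Thompson

lemma sum_free {P X M : Type*} [Group P] [Fintype P] [MulAction P X] [AddCommMonoid M]
    (f : X → M) (hf : ∀ (p : P) x, f (p • x) = f x) (S : Finset X)
    (hS : ∀ (p : P), ∀ x ∈ S, p • x ∈ S) (hfree : ∀ x ∈ S, ∀ p : P, p • x = x → p = 1) :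
    ∃ t ⊆ S, ∑ x ∈ S, f x = Fintype.card P • ∑ x ∈ t, f x := by
  classical
  induction S using Finset.strongInduction with
  | H S ih =>
    rcases S.eq_empty_or_nonempty with rfl | ⟨x, hx⟩
    · exact ⟨∅, by simp, by simp⟩
    · set Q : Finset X := Finset.univ.image (fun p : P => p • x) with hQ
      have hQS : Q ⊆ S := by
        intro y hy
        obtain ⟨p, -, rfl⟩ := Finset.mem_image.mp hy
        exact hS p x hx
      have hxQ : x ∈ Q := Finset.mem_image.mpr ⟨1, Finset.mem_univ _, one_smul _ _⟩
      obtain ⟨t, hts, ht⟩ := ih (S \ Q) (Finset.sdiff_ssubset hQS ⟨x, hxQ⟩) (by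
        intro p y hy
        rw [Finset.mem_sdiff] at hy ⊢
        refine ⟨hS p y hy.1, fun h => hy.2 ?_⟩
        obtain ⟨r, -, hr⟩ := Finset.mem_image.mp h
        refine Finset.mem_image.mpr ⟨p⁻¹ * r, Finset.mem_univ _, ?_⟩
        have hr' : r • x = p • y := hr
        rw [mul_smul, hr', inv_smul_smul]) (fun y hy => hfree y (Finset.mem_sdiff.mp hy).1)
      have hsum : ∑ y ∈ Q, f y = Fintype.card P • f x := by
        rw [hQ, Finset.sum_image]
        · simp [hf]
        · intro p _ r _ h
          have h' : p • x = r • x := h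
          have := hfree x hx (r⁻¹ * p) (by rw [mul_smul, h', inv_smul_smul])
          exact (inv_mul_eq_one.mp this).symm
      refine ⟨insert x t, ?_, ?_⟩
      · intro y hy
        rcases Finset.mem_insert.mp hy with rfl | h
        · exact hx
        · exact (Finset.mem_sdiff.mp (hts h)).1
      · have hxt : x ∉ t := fun h => (Finset.mem_sdiff.mp (hts h)).2 hxQ
        rw [Finset.sum_insert hxt, smul_add, ← ht, ← hsum, add_comm, Finset.sum_sdiff hQS]

lemma aeval_intertwine {U₁ U₂ : Type*} [AddCommGroup U₁] [Module ℂ U₁] [AddCommGroup U₂]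
    [Module ℂ U₂] (S : U₁ →ₗ[ℂ] U₂) (A : Module.End ℂ U₁) (B : Module.End ℂ U₂)
    (h : ∀ u, S (A u) = B (S u)) (q : Polynomial ℂ) (u : U₁) :
    S (Polynomial.aeval A q u) = Polynomial.aeval B q (S u) := by
  induction q using Polynomial.induction_on generalizing u with
  | C c => simp
  | add p q hp hq => simp [hp, hq]
  | monomial n c ih =>
    have e1 : (Polynomial.C c * Polynomial.X ^ (n + 1) : Polynomial ℂ) =
      (Polynomial.C c * Polynomial.X ^ n) * Polynomial.X := by rw [pow_succ, mul_assoc]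
    rw [e1, map_mul _ (_ * _), map_mul _ (_ * _), Module.End.mul_apply, Module.End.mul_apply, ih,
      Polynomial.aeval_X, Polynomial.aeval_X, h]

section Ord
variable (O : ValuationSubring ℂ) {G : Type*} [Group G] [Fintype G]
  {U : Type*} [AddCommGroup U] [Module ℂ U] (σ : G →* Module.End ℂ U)

/-- `O`-span of the image of `G` -/
def ordRing : Subring (Module.End ℂ U) where
  carrier := {T | ∃ c : G → ℂ, (∀ g, c g ∈ O) ∧ T = ∑ g, c g • σ g}
  zero_mem' := ⟨0, fun _ => O.zero_mem, by simp⟩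
  one_mem' := by
    classical
    refine ⟨Pi.single 1 1, fun g => ?_, ?_⟩
    · by_cases h : g = 1
      · subst h; simp
      · rw [Pi.single_eq_of_ne h]; exact O.zero_mem
    · rw [Finset.sum_eq_single 1]
      · simp
      · intro g _ h; rw [Pi.single_eq_of_ne h, zero_smul]
      · simp
  add_mem' := by
    rintro _ _ ⟨c, hc, rfl⟩ ⟨d, hd, rfl⟩
    exact ⟨c + d, fun g => O.add_mem _ _ (hc g) (hd g), by simp [add_smul, Finset.sum_add_distrib]⟩
  neg_mem' := by
    rintro _ ⟨c, hc, rfl⟩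
    exact ⟨-c, fun g => O.neg_mem _ (hc g), by simp⟩
  mul_mem' := by
    rintro _ _ ⟨c, hc, rfl⟩ ⟨d, hd, rfl⟩
    refine ⟨fun k => ∑ g, c g * d (g⁻¹ * k), fun k => ?_, ?_⟩
    · exact sum_mem fun g _ => O.mul_mem _ _ (hc g) (hd _)
    · simp_rw [Finset.sum_smul]
      rw [Finset.sum_mul, Finset.sum_comm]
      refine Finset.sum_congr rfl fun g _ => ?_
      rw [Finset.mul_sum]
      refine Fintype.sum_equiv (Equiv.mulLeft g) _ _ fun h => ?_
      simp [mul_smul, smul_comm (d h)]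

lemma sig_mem_ord (g : G) : σ g ∈ ordRing O σ := by
  classical
  refine ⟨Pi.single g 1, fun h => ?_, ?_⟩
  · by_cases hh : h = g
    · subst hh; simp
    · rw [Pi.single_eq_of_ne hh]; exact O.zero_mem
  · rw [Finset.sum_eq_single g]
    · simp
    · intro h _ hh; rw [Pi.single_eq_of_ne hh, zero_smul]
    · simp

lemma smul_mem_ord {c : ℂ} (hc : c ∈ O) {T : Module.End ℂ U} (hT : T ∈ ordRing O σ) :
    c • T ∈ ordRing O σ := by
  obtain ⟨d, hd, rfl⟩ := hT
  exact ⟨fun g => c * d g, fun g => O.mul_mem _ _ hc (hd g), by simp [Finset.smul_sum, mul_smul]⟩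

lemma ord_ev {T : Module.End ℂ U} (hT : T ∈ ordRing O σ) {γ : ℂ} {u : U} (hu : u ≠ 0)
    (h : T u = γ • u) : O.valuation γ ≤ 1 := by
  obtain ⟨c, hc, rfl⟩ := hT
  obtain ⟨l, hl⟩ : ∃ l : U →ₗ[ℂ] ℂ, l u ≠ 0 := by
    by_contra hcon
    push Not at hcon
    exact hu ((Module.forall_dual_apply_eq_zero_iff ℂ u).mp hcon)
  obtain ⟨k, -, hk⟩ := Finset.exists_max_image (Finset.univ : Finset G)
    (fun g => O.valuation (l (σ g u))) ⟨1, Finset.mem_univ _⟩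
  have h1 : l (σ k (γ • u)) = ∑ g, c g * l (σ (k * g) u) := by
    rw [← h]
    simp [map_sum]
  have h2 : O.valuation γ * O.valuation (l (σ k u)) ≤ O.valuation (l (σ k u)) := by
    rw [← map_mul]
    have : γ * l (σ k u) = l (σ k (γ • u)) := by simp
    rw [this, h1]
    refine Valuation.map_sum_le _ fun g _ => ?_
    rw [map_mul]
    refine (mul_le_of_le_one_left' ((ValuationSubring.valuation_le_one_iff _ _).mpr (hc g))).trans ?_
    exact hk _ (Finset.mem_univ _)
  have h3 : O.valuation (l (σ k u)) ≠ 0 := by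
    intro h0
    have := hk 1 (Finset.mem_univ _)
    simp only [map_one, Module.End.one_apply, h0, le_zero_iff, map_eq_zero] at this
    exact hl this
  by_contra hcon
  push Not at hcon
  have := mul_lt_mul_of_pos_right hcon (zero_lt_iff.mpr h3)
  rw [one_mul] at this
  exact absurd h2 (not_le.mpr this)

end Ord

section K
variable (O : ValuationSubring ℂ) {G : Type*} [Group G]
  {P : Type*} [CommGroup P] [Fintype P] (ι : P →* G) (N : Subgroup G)
  {U : Type*} [AddCommGroup U] [Module ℂ U] (σ : G →* Module.End ℂ U)

noncomputable def cosF (w : Module.End ℂ U) (c : G ⧸ N) : Module.End ℂ U :=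
  σ c.out * w * σ (c.out)⁻¹

variable {N σ} in
lemma cosF_mk {w : Module.End ℂ U} (hwN : ∀ g ∈ N, σ g * w = w * σ g) (h : G) :
    cosF N σ w (h : G ⧸ N) = σ h * w * σ h⁻¹ := by
  unfold cosF
  obtain ⟨n, hn⟩ := QuotientGroup.mk_out_eq_mul N h
  rw [hn, _root_.mul_inv_rev, map_mul, map_mul, mul_assoc (σ h), hwN _ n.2]
  have : σ (n : G) * σ (n : G)⁻¹ = 1 := by rw [← map_mul, mul_inv_cancel, map_one]
  calc σ h * (w * σ (n : G)) * (σ (n : G)⁻¹ * σ h⁻¹)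
      = σ h * w * (σ (n : G) * σ (n : G)⁻¹) * σ h⁻¹ := by simp only [mul_assoc]
    _ = _ := by rw [this, mul_one]

variable {N σ} in
lemma cosF_smul {w : Module.End ℂ U} (hwN : ∀ g ∈ N, σ g * w = w * σ g) (k : G) (c : G ⧸ N) :
    cosF N σ w (k • c) = σ k * cosF N σ w c * σ k⁻¹ := by
  induction c using QuotientGroup.induction_on with
  | H h =>
    rw [show k • (h : G ⧸ N) = ((k * h : G) : G ⧸ N) from rfl, cosF_mk hwN, cosF_mk hwN]
    simp only [_root_.mul_inv_rev, map_mul, mul_assoc]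

open Classical in
lemma lemK_bound (hιN : ∀ x, ι x ∈ N) (hfree : ∀ h, h ∉ N → ∀ x, h⁻¹ * ι x * h ∈ N → x = 1)
    (R : Subring (Module.End ℂ U)) (hσ : ∀ g, σ g ∈ R)
    (hev : ∀ T ∈ R, ∀ (γ : ℂ) (u : U), u ≠ 0 → T u = γ • u → O.valuation γ ≤ 1)
    {w : Module.End ℂ U} (hw : w ∈ R) (hwN : ∀ g ∈ N, σ g * w = w * σ g)
    (a : P →* ℂˣ) (wa : ℂ) (hwa : w * idem (σ.comp ι) a = wa • idem (σ.comp ι) a)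
    (D : ℂ) (hD : D • idem (σ.comp ι) a ∈ R) [Fintype (G ⧸ N)]
    {u : U} (hu : u ≠ 0) (hau : idem (σ.comp ι) a u = u) {γ : ℂ}
    (hγ : (∑ c, cosF N σ w c) u = γ • u) :
    O.valuation (D * (γ - wa)) ≤ O.valuation (Fintype.card P : ℂ) := by
  set E := idem (σ.comp ι) a with hE
  let actP : MulAction P (G ⧸ N) := MulAction.compHom _ ι
  have hsm : ∀ (x : P) (c : G ⧸ N), x • c = ι x • c := fun _ _ => rfl
  have hinv : ∀ (x : P) (c : G ⧸ N), E * cosF N σ w (x • c) * E = E * cosF N σ w c * E := by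
    intro x c
    have h1 : E * σ (ι x) = (a x : ℂ) • E := idem_mul_sig (σ.comp ι) a x
    have h2 : σ (ι x)⁻¹ * E = ((a x : ℂ)⁻¹) • E := by
      have := sig_mul_idem (σ.comp ι) a x⁻¹
      simpa using this
    rw [hsm, cosF_smul hwN]
    calc E * (σ (ι x) * cosF N σ w c * σ (ι x)⁻¹) * E
        = (E * σ (ι x)) * cosF N σ w c * (σ (ι x)⁻¹ * E) := by simp only [mul_assoc]
      _ = _ := by
        rw [h1, h2, smul_mul_assoc, smul_mul_assoc, mul_smul_comm, smul_smul,
          mul_inv_cancel₀ (a x).ne_zero, one_smul]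
  obtain ⟨t, -, ht⟩ := sum_free (P := P) (fun c : G ⧸ N => E * cosF N σ w c * E) hinv
    (Finset.univ.erase ((1 : G) : G ⧸ N)) (by
      intro x c hc
      rw [Finset.mem_erase] at hc ⊢
      refine ⟨fun h => hc.1 ?_, Finset.mem_univ _⟩
      have h2 : c = x⁻¹ • ((1 : G) : G ⧸ N) := by rw [← h, inv_smul_smul]
      rw [h2, hsm]
      change (((ι x⁻¹ * 1 : G)) : G ⧸ N) = _
      rw [QuotientGroup.eq]
      simpa using hιN x) (by
      intro c hc x hx
      rw [Finset.mem_erase] at hc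
      induction c using QuotientGroup.induction_on with
      | H h =>
        refine hfree h (fun hN => hc.1 ?_) x ?_
        · rw [QuotientGroup.eq]; simpa using hN
        · rw [hsm] at hx
          have hx' : ((ι x * h : G) : G ⧸ N) = (h : G ⧸ N) := hx
          rw [eq_comm, QuotientGroup.eq] at hx'
          simpa [mul_assoc] using hx')
  have h0 : E * (∑ c, cosF N σ w c) * E = wa • E +
      (Fintype.card P : ℂ) • ∑ c ∈ t, E * cosF N σ w c * E := by
    rw [Finset.mul_sum, Finset.sum_mul, ← Finset.add_sum_erase _ _ (Finset.mem_univ ((1 : G) : G ⧸ N)),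
      ht, cosF_mk hwN, Nat.cast_smul_eq_nsmul]
    congr 1
    have : E * E = E := idem_sq _ _
    rw [inv_one, map_one, one_mul, mul_one, mul_assoc, hwa, mul_smul_comm, this]
  have hT : (∑ c ∈ t, (D • E) * cosF N σ w c) ∈ R := by
    refine sum_mem fun c _ => R.mul_mem hD ?_
    exact R.mul_mem (R.mul_mem (hσ _) hw) (hσ _)
  have hc0 := card_ne (P := P)
  have hTu : (∑ c ∈ t, (D • E) * cosF N σ w c) u = (D * (γ - wa) / Fintype.card P) • u := by
    have h1 := congrArg (fun T : Module.End ℂ U => T u) h0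
    simp only [Module.End.mul_apply, hau, hγ, map_smul, LinearMap.add_apply, LinearMap.smul_apply,
      LinearMap.sum_apply] at h1
    simp only [Module.End.mul_apply, LinearMap.smul_apply, LinearMap.sum_apply]
    rw [← Finset.smul_sum]
    have h2 : ∑ c ∈ t, E (cosF N σ w c u) = ((γ - wa) / Fintype.card P) • u := by
      rw [div_eq_inv_mul, mul_smul, sub_smul, h1, add_sub_cancel_left, smul_smul,
        inv_mul_cancel₀ hc0, one_smul]
    rw [h2, smul_smul, mul_div_assoc]
  have := hev _ hT _ u hu hTu
  rw [map_div₀] at this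
  exact (div_le_one₀ (zero_lt_iff.mpr ((Valuation.ne_zero_iff _).mpr hc0))).mp this

lemma lemK [Finite G] [FiniteDimensional ℂ U] (hιN : ∀ x, ι x ∈ N)
    (hfree : ∀ h, h ∉ N → ∀ x, h⁻¹ * ι x * h ∈ N → x = 1)
    (R : Subring (Module.End ℂ U)) (hσ : ∀ g, σ g ∈ R)
    (hev : ∀ T ∈ R, ∀ (γ : ℂ) (u : U), u ≠ 0 → T u = γ • u → O.valuation γ ≤ 1)
    {w : Module.End ℂ U} (hw : w ∈ R) (hwN : ∀ g ∈ N, σ g * w = w * σ g)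
    (a b : P →* ℂˣ) (wa wb : ℂ) (hwa : w * idem (σ.comp ι) a = wa • idem (σ.comp ι) a)
    (hwb : w * idem (σ.comp ι) b = wb • idem (σ.comp ι) b)
    (D : ℂ) (hDa : D • idem (σ.comp ι) a ∈ R) (hDb : D • idem (σ.comp ι) b ∈ R)
    (hv : O.valuation (Fintype.card P : ℂ) < O.valuation (D * (wa - wb))) :
    ∃ K : Submodule ℂ U, (∀ g, ∀ u ∈ K, σ g u ∈ K) ∧ LinearMap.range (idem (σ.comp ι) a) ≤ K ∧
      ∀ u ∈ K, idem (σ.comp ι) b u = u → u = 0 := by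
  classical
  have : Fintype (G ⧸ N) := Fintype.ofFinite _
  obtain ⟨g, hg⟩ : ∃ g, g = ∑ c, cosF N σ w c := ⟨_, rfl⟩
  have hcomm : ∀ k, σ k * g = g * σ k := by
    intro k
    have h1 : σ k * g * σ k⁻¹ = g := by
      rw [hg, Finset.mul_sum, Finset.sum_mul]
      refine Fintype.sum_equiv (MulAction.toPerm k) _ _ fun c => ?_
      rw [MulAction.toPerm_apply, cosF_smul hwN]
    have h2 : σ k⁻¹ * σ k = 1 := by rw [← map_mul, inv_mul_cancel, map_one]
    conv_rhs => rw [← h1]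
    rw [mul_assoc, h2, mul_one]
  have hcommE : ∀ c, idem (σ.comp ι) c * g = g * idem (σ.comp ι) c := by
    intro c
    unfold idem
    rw [smul_mul_assoc, mul_smul_comm, Finset.mul_sum, Finset.sum_mul]
    congr 1
    refine Finset.sum_congr rfl fun x _ => ?_
    rw [smul_mul_assoc, mul_smul_comm]
    congr 1
    exact hcomm _
  have hgW : ∀ u ∈ LinearMap.range (idem (σ.comp ι) a), g u ∈ LinearMap.range (idem (σ.comp ι) a) := by
    rintro _ ⟨u, rfl⟩
    refine ⟨g u, ?_⟩
    rw [← Module.End.mul_apply, hcommE, Module.End.mul_apply]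
  set gW := g.restrict hgW with hgWdef
  set q := minpoly ℂ gW with hq
  have hqg : ∀ k, σ k * Polynomial.aeval g q = Polynomial.aeval g q * σ k := by
    intro k
    ext u
    exact aeval_intertwine (σ k) g g (fun u => LinearMap.congr_fun (hcomm k) u) q u
  refine ⟨LinearMap.ker (Polynomial.aeval g q), ?_, ?_, ?_⟩
  · intro k u hu
    rw [LinearMap.mem_ker] at hu ⊢
    rw [← Module.End.mul_apply, ← hqg, Module.End.mul_apply, hu, map_zero]
  · intro u hu
    rw [LinearMap.mem_ker]
    have h1 := aeval_intertwine (LinearMap.range (idem (σ.comp ι) a)).subtype gW g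
      (fun u => rfl) q ⟨u, hu⟩
    rw [hq, minpoly.aeval] at h1
    simpa using h1.symm
  · intro u hu hbu
    by_contra hu0
    set W' := LinearMap.ker (Polynomial.aeval g q) ⊓ LinearMap.ker (idem (σ.comp ι) b - 1) with hW'
    have hgW' : ∀ u ∈ W', g u ∈ W' := by
      rintro u ⟨h1, h2⟩
      refine ⟨?_, ?_⟩
      · have := aeval_intertwine g g g (fun u => rfl) q u
        rw [LinearMap.mem_ker.mp h1, map_zero] at this
        exact LinearMap.mem_ker.mpr this.symm
      · have h3 : idem (σ.comp ι) b u - u = 0 := LinearMap.mem_ker.mp h2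
        refine LinearMap.mem_ker.mpr ?_
        change idem (σ.comp ι) b (g u) - g u = 0
        rw [← Module.End.mul_apply, hcommE, Module.End.mul_apply, ← map_sub, h3, map_zero]
    have huW' : u ∈ W' := ⟨hu, LinearMap.mem_ker.mpr (sub_eq_zero.mpr hbu)⟩
    have : Nontrivial W' := ⟨⟨u, huW'⟩, 0, fun h => hu0 (congrArg Subtype.val h)⟩
    obtain ⟨γ, hγ⟩ := Module.End.exists_eigenvalue (g.restrict hgW')
    obtain ⟨⟨y, hyW⟩, hy⟩ := hγ.exists_hasEigenvector
    have hy0 : y ≠ 0 := fun h => hy.2 (Subtype.ext h)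
    have hgy : g y = γ • y := congrArg Subtype.val hy.apply_eq_smul
    have hby : idem (σ.comp ι) b y = y := sub_eq_zero.mp (LinearMap.mem_ker.mp hyW.2)
    have hqy : Polynomial.aeval g q y = 0 := hyW.1
    have hroot : q.IsRoot γ := by
      have h1 := aeval_intertwine (LinearMap.toSpanSingleton ℂ U y) (γ • 1) g
        (fun c => by simp [hgy, smul_smul, mul_comm]) q 1
      rw [LinearMap.toSpanSingleton_apply, LinearMap.toSpanSingleton_apply, one_smul, hqy] at h1
      have h2 := (smul_eq_zero.mp h1).resolve_right hy0
      have h3 : Polynomial.aeval (γ • (1 : Module.End ℂ ℂ)) q = algebraMap ℂ _ (q.eval γ) := by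
        rw [← Algebra.algebraMap_eq_smul_one, Polynomial.aeval_algebraMap_apply]
        simp
      rw [h3] at h2
      simpa using h2
    obtain ⟨⟨z, hzW⟩, hz⟩ := (Module.End.hasEigenvalue_of_isRoot hroot).exists_hasEigenvector
    have hz0 : z ≠ 0 := fun h => hz.2 (Subtype.ext h)
    have hgz : g z = γ • z := congrArg Subtype.val hz.apply_eq_smul
    have haz : idem (σ.comp ι) a z = z := by
      obtain ⟨z', rfl⟩ := hzW
      rw [← Module.End.mul_apply, idem_sq]
    rw [hg] at hgy hgz
    have b1 := lemK_bound O ι N σ hιN hfree R hσ hev hw hwN a wa hwa D hDa hz0 haz hgz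
    have b2 := lemK_bound O ι N σ hιN hfree R hσ hev hw hwN b wb hwb D hDb hy0 hby hgy
    refine absurd hv (not_lt.mpr ?_)
    have : D * (wa - wb) = D * (γ - wb) - D * (γ - wa) := by ring
    rw [this]
    exact Valuation.map_sub_le _ b2 b1
end K
end Thompson


namespace Thompson

section De
variable (O : ValuationSubring ℂ) {P : Type*} [CommGroup P] [Fintype P]
  {U : Type*} [AddCommGroup U] [Module ℂ U] (σ : P →* Module.End ℂ U)

lemma exists_prim {p f : ℕ} (hp : p.Prime) (hP : Fintype.card P = p ^ f) (c : P →* ℂˣ)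
    (hc : c ≠ 1) : ∃ y, IsPrimitiveRoot (c y : ℂ) p := by
  obtain ⟨x, hx⟩ : ∃ x, c x ≠ 1 := by
    by_contra h; push Not at h; exact hc (MonoidHom.ext h)
  have h1 : (c x) ^ (p ^ f) = 1 := by
    rw [← map_pow, ← hP, pow_card_eq_one, map_one]
  obtain ⟨j, hj, hj'⟩ := (Nat.dvd_prime_pow hp).mp (orderOf_dvd_of_pow_eq_one h1)
  have hj0 : j ≠ 0 := by
    rintro rfl
    rw [pow_zero, orderOf_eq_one_iff] at hj'
    exact hx hj'
  obtain ⟨i, rfl⟩ := Nat.exists_eq_succ_of_ne_zero hj0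
  refine ⟨x ^ (p ^ i), ?_⟩
  have h2 : IsPrimitiveRoot (c x) (p ^ i * p) := by
    rw [← pow_succ]
    have := IsPrimitiveRoot.orderOf (c x)
    rwa [hj'] at this
  have h3 := h2.pow (by have := hp.pos; positivity) rfl
  rw [map_pow]
  exact (IsPrimitiveRoot.coe_units_iff).mpr h3

variable {σ} in
lemma exists_sep {p f : ℕ} (hp : p.Prime) (hP : Fintype.card P = p ^ f)
    {ζ : ℂ} (hζ : IsPrimitiveRoot ζ p)
    (R : Subring (Module.End ℂ U)) (hσ : ∀ x, σ x ∈ R)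
    (hR : ∀ c ∈ O, ∀ T ∈ R, c • T ∈ R) (a : P →* ℂˣ) (S : Finset (P →* ℂˣ)) (haS : a ∉ S) :
    ∃ T ∈ R, ∃ t : (P →* ℂˣ) → ℂ, (∀ c, T * idem σ c = t c • idem σ c) ∧
      O.valuation (t a) = O.valuation (1 - ζ) ^ S.card ∧ ∀ b ∈ S, t b = 0 := by
  classical
  induction S using Finset.induction_on with
  | empty => exact ⟨1, R.one_mem, fun _ => 1, by simp, by simp, by simp⟩
  | insert b S hb ih =>
    obtain ⟨T, hT, t, h1, h2, h3⟩ := ih (fun h => haS (Finset.mem_insert_of_mem h))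
    have hab : a ≠ b := fun h => haS (h ▸ Finset.mem_insert_self _ _)
    obtain ⟨y, hy⟩ := exists_prim hp hP (a / b) (fun h => hab (div_eq_one.mp h))
    have hroot : ∀ (c : P →* ℂˣ), (c y : ℂ) ^ Fintype.card P = 1 := by
      intro c
      rw [← Units.val_pow_eq_pow_val, ← map_pow, pow_card_eq_one, map_one, Units.val_one]
    have hvb : O.valuation (b y : ℂ) = 1 := val_root O Fintype.card_ne_zero (hroot b)
    have hbO : (b y : ℂ) ∈ O := (ValuationSubring.valuation_le_one_iff _ _).mp hvb.le
    refine ⟨(σ y - (b y : ℂ) • 1) * T, R.mul_mem (R.sub_mem (hσ y) (hR _ hbO _ R.one_mem)) hT,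
      fun c => ((c y : ℂ) - b y) * t c, ?_, ?_, ?_⟩
    · intro c
      rw [mul_assoc, h1, mul_smul_comm, sub_mul, sig_mul_idem, smul_mul_assoc, one_mul, ← sub_smul,
        smul_smul, mul_comm]
    · rw [map_mul, h2, Finset.card_insert_of_notMem hb, pow_succ, mul_comm]
      congr 1
      have e : (a y : ℂ) - b y = - (b y * (1 - ((a / b) y : ℂˣ))) := by
        have : (((a / b) y : ℂˣ) : ℂ) = a y / b y := by simp
        rw [this]
        field_simp
        ring
      rw [e, Valuation.map_neg, map_mul, hvb, one_mul, val_one_sub_eq O hp hζ hy]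
    · intro c hc
      rcases Finset.mem_insert.mp hc with rfl | h
      · simp
      · simp [h3 c h]

open Classical in
/-- characters occurring -/
noncomputable def occ : Finset (P →* ℂˣ) := Finset.univ.filter fun a => idem σ a ≠ 0

lemma mem_occ {a : P →* ℂˣ} : a ∈ occ σ ↔ idem σ a ≠ 0 := by
  classical
  simp [occ]

lemma sum_occ : ∑ a ∈ occ σ, idem σ a = 1 := by
  classical
  rw [← sum_idem σ]
  refine Finset.sum_subset (Finset.subset_univ _) fun a _ h => ?_
  by_contra h'
  exact h ((mem_occ σ).mpr h')

variable {σ} in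
lemma De {p f : ℕ} (hp : p.Prime) (hP : Fintype.card P = p ^ f)
    {ζ : ℂ} (hζ : IsPrimitiveRoot ζ p)
    (R : Subring (Module.End ℂ U)) (hσ : ∀ x, σ x ∈ R)
    (hR : ∀ c ∈ O, ∀ T ∈ R, c • T ∈ R) (a : P →* ℂˣ) :
    (1 - ζ) ^ ((occ σ).card - 1) • idem σ a ∈ R := by
  classical
  by_cases ha : a ∈ occ σ
  swap
  · rw [mem_occ, not_not] at ha
    rw [ha, smul_zero]; exact R.zero_mem
  obtain ⟨T, hT, t, h1, h2, h3⟩ := exists_sep O hp hP hζ R hσ hR a ((occ σ).erase a)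
    (Finset.notMem_erase _ _)
  have hT2 : T = t a • idem σ a := by
    rw [← mul_one T, ← sum_occ σ, Finset.mul_sum, ← Finset.add_sum_erase _ _ ha, h1,
      Finset.sum_eq_zero, add_zero]
    intro b hb
    rw [h1, h3 b hb, zero_smul]
  rw [Finset.card_erase_of_mem ha] at h2
  have hz : (1 - ζ) ≠ 0 := sub_ne_zero.mpr fun h => hζ.ne_one hp.one_lt h.symm
  have hta : t a ≠ 0 := by
    rw [← (O.valuation).ne_zero_iff, h2]
    exact pow_ne_zero _ ((O.valuation).ne_zero_iff.mpr hz)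
  have : (1 - ζ) ^ ((occ σ).card - 1) • idem σ a =
      ((1 - ζ) ^ ((occ σ).card - 1) / t a) • T := by
    rw [hT2, smul_smul, div_mul_cancel₀ _ hta]
  rw [this]
  refine hR _ ?_ _ hT
  rw [← ValuationSubring.valuation_le_one_iff, map_div₀, h2, map_pow, div_self]
  exact pow_ne_zero _ ((O.valuation).ne_zero_iff.mpr hz)

lemma card_occ_le [FiniteDimensional ℂ U] : (occ σ).card ≤ Module.finrank ℂ U := by
  classical
  have hex : ∀ a : occ σ, ∃ u, idem σ (a : P →* ℂˣ) u ≠ 0 := by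
    intro a
    by_contra h
    push Not at h
    exact (mem_occ σ).mp a.2 (LinearMap.ext h)
  choose u hu using hex
  have hli : LinearIndependent ℂ (fun a : occ σ => idem σ (a : P →* ℂˣ) (u a)) := by
    rw [Fintype.linearIndependent_iff]
    intro c hc a
    have h1 := congrArg (idem σ (a : P →* ℂˣ)) hc
    rw [map_sum, map_zero, Finset.sum_eq_single a] at h1
    · rw [map_smul, ← Module.End.mul_apply, idem_sq] at h1
      exact (smul_eq_zero.mp h1).resolve_right (hu a)
    · intro b _ hb
      rw [map_smul, ← Module.End.mul_apply, idem_mul_ne, LinearMap.zero_apply, smul_zero]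
      exact fun h => hb (Subtype.ext h.symm)
    · simp
  simpa using hli.fintype_card_le_finrank
end De

section Ad
variable (O : ValuationSubring ℂ) {G : Type*} [Group G]
  {V : Type*} [AddCommGroup V] [Module ℂ V] (ρ : G →* Module.End ℂ V)

/-- two sided action -/
noncomputable def two : G × G →* Module.End ℂ (Module.End ℂ V) where
  toFun g := LinearMap.mulLeft ℂ (ρ g.1) * LinearMap.mulRight ℂ (ρ g.2⁻¹)
  map_one' := by ext φ : 1; simp
  map_mul' g h := by ext φ : 1; simp [mul_assoc]

lemma two_apply (g : G × G) (φ : Module.End ℂ V) : two ρ g φ = ρ g.1 * φ * ρ g.2⁻¹ := by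
  simp [two, mul_assoc]

noncomputable def ad : G →* Module.End ℂ (Module.End ℂ V) :=
  (two ρ).comp ((MonoidHom.id G).prod (MonoidHom.id G))

lemma ad_apply (g : G) (φ : Module.End ℂ V) : ad ρ g φ = ρ g * φ * ρ g⁻¹ := by
  simp [ad, two_apply]

lemma LR_mem [Fintype G] {T S : Module.End ℂ V} (hT : T ∈ ordRing O ρ) (hS : S ∈ ordRing O ρ) :
    LinearMap.mulLeft ℂ T * LinearMap.mulRight ℂ S ∈ ordRing O (two ρ) := by
  obtain ⟨c, hc, rfl⟩ := hT
  obtain ⟨d, hd, rfl⟩ := hS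
  refine ⟨fun g => c g.1 * d g.2⁻¹, fun g => O.mul_mem _ _ (hc _) (hd _), ?_⟩
  ext φ : 1
  simp only [Module.End.mul_apply, LinearMap.mulRight_apply, LinearMap.mulLeft_apply,
    LinearMap.sum_apply, LinearMap.smul_apply, two_apply]
  rw [Fintype.sum_prod_type, Finset.mul_sum, Finset.sum_mul]
  refine Finset.sum_congr rfl fun g _ => ?_
  rw [Finset.mul_sum]
  refine Fintype.sum_equiv (Equiv.inv G) _ _ fun h => ?_
  simp [mul_smul, mul_assoc, smul_comm (d h)]

variable {P : Type*} [CommGroup P] [Fintype P] (ι : P →* G)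

lemma ad_idem_LR (l a b : P →* ℂˣ) :
    idem ((ad ρ).comp ι) l * (LinearMap.mulLeft ℂ (idem (ρ.comp ι) a) *
      LinearMap.mulRight ℂ (idem (ρ.comp ι) b)) = open Classical in
      if l = a / b then (LinearMap.mulLeft ℂ (idem (ρ.comp ι) a) *
      LinearMap.mulRight ℂ (idem (ρ.comp ι) b)) else 0 := by
  classical
  set X := (LinearMap.mulLeft ℂ (idem (ρ.comp ι) a) *
      LinearMap.mulRight ℂ (idem (ρ.comp ι) b)) with hX
  have h : idem ((ad ρ).comp ι) (a / b) * X = X := by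
    apply idem_of_fix
    intro x
    ext φ : 1
    have h1 := sig_mul_idem (ρ.comp ι) a x
    have h2 := idem_mul_sig (ρ.comp ι) b x⁻¹
    simp only [MonoidHom.comp_apply, map_inv] at h1 h2
    simp only [hX, MonoidHom.comp_apply, Module.End.mul_apply, LinearMap.mulLeft_apply,
      LinearMap.mulRight_apply, LinearMap.smul_apply, ad_apply]
    calc _ = (ρ (ι x) * idem (ρ.comp ι) a) * φ * (idem (ρ.comp ι) b * ρ (ι x)⁻¹) := by
          simp only [mul_assoc]
      _ = _ := by
          rw [h1, h2]
          simp only [smul_mul_assoc, mul_smul_comm, smul_smul, MonoidHom.div_apply,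
            Units.val_div_eq_div_val, Units.val_inv_eq_inv_val, mul_assoc]
          rw [div_eq_mul_inv, mul_comm]
  split_ifs with hl
  · rw [hl, h]
  · rw [← h, ← mul_assoc, idem_mul_ne _ _ _ hl, zero_mul]

lemma ad_idem_mem [Fintype G] (l : P →* ℂˣ) (D : ℂ) (hD : ∀ a, D • idem (ρ.comp ι) a ∈ ordRing O ρ) :
    D ^ 2 • idem ((ad ρ).comp ι) l ∈ ordRing O (two ρ) := by
  classical
  have h1 : (1 : Module.End ℂ (Module.End ℂ V)) = ∑ a, ∑ b, (LinearMap.mulLeft ℂ (idem (ρ.comp ι) a) *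
      LinearMap.mulRight ℂ (idem (ρ.comp ι) b)) := by
    ext φ : 1
    simp only [LinearMap.sum_apply, Module.End.mul_apply, LinearMap.mulLeft_apply,
      LinearMap.mulRight_apply, ← Finset.mul_sum, ← Finset.sum_mul, sum_idem]
    simp
  rw [← mul_one (idem _ l), h1]
  simp only [Finset.mul_sum, Finset.smul_sum, ad_idem_LR]
  refine sum_mem fun a _ => sum_mem fun b _ => ?_
  split_ifs
  · have := LR_mem O ρ (hD a) (hD b)
    convert this using 1
    ext φ : 1
    simp [smul_smul, sq]
  · rw [smul_zero]; exact zero_mem _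

end Ad
end Thompson


namespace Thompson

set_option linter.unusedSectionVars false

structure Core (p : ℕ) (O : ValuationSubring ℂ) {G : Type*} [Group G] {P : Type*} [CommGroup P]
    (ι : P →* G) (N : Subgroup G) {V : Type*} [AddCommGroup V] [Module ℂ V]
    (ρ : G →* Module.End ℂ V) : Prop where
  hp : p.Prime
  hO : O.valuation (p : ℂ) < 1
  ιN : ∀ x, ι x ∈ N
  free : ∀ h, h ∉ N → ∀ x, h⁻¹ * ι x * h ∈ N → x = 1
  norm : ∀ g ∈ N, ∃ τ : MulAut P, ∀ x, g * ι x = ι (τ x) * g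
  faith : ∀ x, ρ (ι x) = 1 → x = 1
  irr : ∀ K : Submodule ℂ V, (∀ g, ∀ u ∈ K, ρ g u ∈ K) → K = ⊥ ∨ K = ⊤
  dim : 2 * Module.finrank ℂ V + 1 < p

variable {p : ℕ} {O : ValuationSubring ℂ} {G : Type*} [Group G] [Fintype G] {P : Type*} [CommGroup P]
  [Fintype P] {ι : P →* G} {N : Subgroup G} {V : Type*} [AddCommGroup V] [Module ℂ V]
  [FiniteDimensional ℂ V] {ρ : G →* Module.End ℂ V}

lemma pi_lt (hc : Core p O ι N ρ) {ζ : ℂ} (hζ : IsPrimitiveRoot ζ p) :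
    O.valuation (1 - ζ) < 1 ∧ 0 < O.valuation (1 - ζ) := by
  have h1 := val_pi O hc.hp hζ
  have hz : (1 - ζ) ≠ 0 := sub_ne_zero.mpr fun h => hζ.ne_one hc.hp.one_lt h.symm
  refine ⟨?_, zero_lt_iff.mpr ((O.valuation).ne_zero_iff.mpr hz)⟩
  by_contra h
  push Not at h
  have h2 := one_le_pow_of_one_le' h (p - 1)
  rw [h1] at h2
  exact absurd hc.hO (not_lt.mpr h2)

lemma card_val (hc : Core p O ι N ρ) {ζ : ℂ} (hζ : IsPrimitiveRoot ζ p) {f : ℕ}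
    (hP : Fintype.card P = p ^ f) (m : ℕ) (hm : m < (p - 1) * f) :
    O.valuation (Fintype.card P : ℂ) < O.valuation (1 - ζ) ^ m := by
  have := pi_lt hc hζ
  rw [hP, Nat.cast_pow, map_pow, ← val_pi O hc.hp hζ, ← pow_mul]
  exact pow_lt_pow_right_of_lt_one₀ this.2 this.1 hm

lemma core_D (hc : Core p O ι N ρ) {ζ : ℂ} (hζ : IsPrimitiveRoot ζ p) {f : ℕ}
    (hP : Fintype.card P = p ^ f) (a : P →* ℂˣ) :
    (1 - ζ) ^ ((occ (ρ.comp ι)).card - 1) • idem (ρ.comp ι) a ∈ ordRing O ρ :=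
  De O hc.hp hP hζ _ (fun x => sig_mem_ord O ρ (ι x)) (fun _ h _ h' => smul_mem_ord O ρ h h') a

/-- case `f ≥ 2` -/
lemma core_sep_two (hc : Core p O ι N ρ) {f : ℕ} (hf : 2 ≤ f)
    (hP : Fintype.card P = p ^ f) (l : P →* ℂˣ) (hl : l ≠ 1) :
    ∃ K : Submodule ℂ (Module.End ℂ V), (∀ g, ∀ u ∈ K, ad ρ g u ∈ K) ∧
      LinearMap.range (idem ((ad ρ).comp ι) 1) ≤ K ∧
      ∀ u ∈ K, idem ((ad ρ).comp ι) l u = u → u = 0 := by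
  obtain ⟨ζ, hζ⟩ : ∃ ζ : ℂ, IsPrimitiveRoot ζ p :=
    ⟨_, Complex.isPrimitiveRoot_exp p hc.hp.ne_zero⟩
  set D := (1 - ζ) ^ ((occ (ρ.comp ι)).card - 1) with hD
  have hDmem := fun l => ad_idem_mem O ρ ι l D (core_D hc hζ hP)
  refine lemK O ι N (ad ρ) hc.ιN hc.free (ordRing O (two ρ))
    (fun g => sig_mem_ord O (two ρ) (g, g)) (fun T hT γ u hu h => ord_ev O _ hT hu h)
    (hDmem 1) ?_ 1 l (D ^ 2) 0 ?_ ?_ (D ^ 2) (hDmem _) (hDmem _) ?_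
  · intro g hg
    obtain ⟨τ, hτ⟩ := hc.norm g hg
    rw [mul_smul_comm, smul_mul_assoc]
    congr 1
    have := idem_conj ((ad ρ).comp ι) 1 (ad ρ g) τ (fun x => by
      simp only [MonoidHom.comp_apply, ← map_mul, hτ x])
    simpa using this
  · rw [smul_mul_assoc, idem_sq]
  · rw [smul_mul_assoc, idem_mul_ne _ _ _ (Ne.symm hl), smul_zero, zero_smul]
  · have : O.valuation (D ^ 2 * (D ^ 2 - 0)) =
        O.valuation (1 - ζ) ^ (4 * ((occ (ρ.comp ι)).card - 1)) := by
      rw [hD, ← map_pow]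
      congr 1
      ring
    rw [this]
    refine card_val hc hζ hP _ ?_
    have h1 := card_occ_le (ρ.comp ι)
    have h2 := hc.dim
    have h3 : (p - 1) * 2 ≤ (p - 1) * f := Nat.mul_le_mul_left _ hf
    omega

/-- the automizer -/
def autz (ι : P →* G) (N : Subgroup G) : Subgroup (MulAut P) where
  carrier := {τ | ∃ g ∈ N, ∀ x, g * ι x = ι (τ x) * g}
  one_mem' := ⟨1, N.one_mem, by simp⟩
  mul_mem' := by
    rintro τ τ' ⟨g, hg, h⟩ ⟨g', hg', h'⟩
    refine ⟨g * g', N.mul_mem hg hg', fun x => ?_⟩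
    rw [mul_assoc, h', ← mul_assoc, h, mul_assoc]; rfl
  inv_mem' := by
    rintro τ ⟨g, hg, h⟩
    refine ⟨g⁻¹, N.inv_mem hg, fun x => ?_⟩
    have := h (τ⁻¹ x)
    rw [MulAut.apply_inv_self] at this
    rw [inv_mul_eq_iff_eq_mul, ← mul_assoc, this, mul_inv_cancel_right]

lemma char_inj (hp : p.Prime) (hP : Nat.card P = p) (l : P →* ℂˣ) (hl : l ≠ 1) :
    Function.Injective l := by
  have : Fact (Nat.card P).Prime := ⟨hP ▸ hp⟩
  rw [← MonoidHom.ker_eq_bot_iff]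
  rcases l.ker.eq_bot_or_eq_top_of_prime_card with h | h
  · exact h
  · refine absurd (MonoidHom.ext fun x => ?_) hl
    have hx : x ∈ l.ker := h ▸ Subgroup.mem_top x
    exact hx

lemma core_orb (hc : Core p O ι N ρ) (hP : Fintype.card P = p) :
    ∃ e, (occ (ρ.comp ι)).card ≤ e ∧ 3 * e ≤ p - 1 ∧ Nat.card (autz ι N) = e := by
  classical
  obtain ⟨ζ, hζ⟩ : ∃ ζ : ℂ, IsPrimitiveRoot ζ p :=
    ⟨_, Complex.isPrimitiveRoot_exp p hc.hp.ne_zero⟩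
  have hP' : Nat.card P = p := by rw [Nat.card_eq_fintype_card, hP]
  have hP1 : Fintype.card P = p ^ 1 := by rw [hP, pow_one]
  have : Fact p.Prime := ⟨hc.hp⟩
  have : Finite (MulAut P) := inferInstance
  have : Fintype (autz ι N) := Fintype.ofFinite _
  refine ⟨_, ?_, ?_, rfl⟩
  all_goals
  -- a nontrivial occurring character
    obtain ⟨a, haocc, ha⟩ : ∃ a ∈ occ (ρ.comp ι), a ≠ 1 := by
      by_contra hcon
      push Not at hcon
      have hone : ∀ x, ρ (ι x) = 1 := by
        intro x
        rw [← sum_occ (ρ.comp ι), ← mul_one (ρ (ι x)), ← sum_occ (ρ.comp ι), Finset.mul_sum]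
        refine Finset.sum_congr rfl fun b hb => ?_
        have := sig_mul_idem (ρ.comp ι) b x
        rw [hcon b hb] at this ⊢
        simpa using this
      have : Subsingleton P := ⟨fun x y => by rw [hc.faith x (hone x), hc.faith y (hone y)]⟩
      have := Fintype.card_le_one_iff_subsingleton.mpr this
      have := hc.hp.one_lt
      omega
    let orb : Finset (P →* ℂˣ) := Finset.univ.image
      (fun τ : autz ι N => a.comp (τ : MulAut P).toMonoidHom)
    have horbcard : orb.card = Nat.card (autz ι N) := by
      rw [Finset.card_image_of_injective, Finset.card_univ, Nat.card_eq_fintype_card]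
      intro τ τ' h
      apply Subtype.ext
      apply MulEquiv.ext
      intro x
      apply char_inj hc.hp hP' a ha
      exact DFunLike.congr_fun h x
  · rw [← horbcard]
    refine Finset.card_le_card fun b hb => ?_
    by_contra hbo
    set D := (1 - ζ) ^ ((occ (ρ.comp ι)).card - 1) with hD
    have hDmem := core_D hc hζ hP1
    have haorb : a ∈ orb := Finset.mem_image.mpr ⟨1, Finset.mem_univ _, by ext; simp⟩
    obtain ⟨K, hK1, hK2, hK3⟩ := lemK O ι N ρ hc.ιN hc.free (ordRing O ρ)
      (fun g => sig_mem_ord O ρ g) (fun T hT γ u hu h => ord_ev O _ hT hu h)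
      (w := ∑ c ∈ orb, D • idem (ρ.comp ι) c) (sum_mem fun c _ => hDmem c)
      (by
        intro g hg
        obtain ⟨τ, hτ⟩ := hc.norm g hg
        rw [Finset.mul_sum, Finset.sum_mul]
        symm
        refine Finset.sum_bij' (fun c _ => c.comp τ.toMonoidHom)
          (fun c _ => c.comp (τ⁻¹ : MulAut P).toMonoidHom) ?_ ?_ ?_ ?_ ?_
        · intro c hcm
          obtain ⟨τ', -, rfl⟩ := Finset.mem_image.mp hcm
          exact Finset.mem_image.mpr ⟨τ' * ⟨τ, g, hg, hτ⟩, Finset.mem_univ _, rfl⟩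
        · intro c hcm
          obtain ⟨τ', -, rfl⟩ := Finset.mem_image.mp hcm
          exact Finset.mem_image.mpr ⟨τ' * (⟨τ, g, hg, hτ⟩ : autz ι N)⁻¹, Finset.mem_univ _, rfl⟩
        · intro c _; ext x; simp
        · intro c _; ext x; simp
        · intro c _
          rw [smul_mul_assoc, mul_smul_comm]
          congr 1
          exact (idem_conj (ρ.comp ι) c (ρ g) τ (fun x => by
            simp only [MonoidHom.comp_apply, ← map_mul, hτ x])).symm)
      a b D 0
      (by
        rw [Finset.sum_mul, Finset.sum_eq_single a]
        · rw [smul_mul_assoc, idem_sq]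
        · intro c _ hca
          rw [smul_mul_assoc, idem_mul_ne _ _ _ hca, smul_zero]
        · exact fun h => absurd haorb h)
      (by
        rw [Finset.sum_mul, Finset.sum_eq_zero, zero_smul]
        intro c hco
        have hcb : c ≠ b := fun h => hbo (h ▸ hco)
        rw [smul_mul_assoc, idem_mul_ne _ _ _ hcb, smul_zero])
      D (hDmem _) (hDmem _) (by
        have : O.valuation (D * (D - 0)) =
            O.valuation (1 - ζ) ^ (2 * ((occ (ρ.comp ι)).card - 1)) := by
          rw [hD, ← map_pow]
          congr 1
          ring
        rw [this]
        refine card_val hc hζ hP1 _ ?_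
        have h1 := card_occ_le (ρ.comp ι)
        have h2 := hc.dim
        omega)
    rcases hc.irr K hK1 with h | h
    · rw [h, le_bot_iff, LinearMap.range_eq_bot] at hK2
      exact (mem_occ _).mp haocc hK2
    · refine (mem_occ _).mp hb (LinearMap.ext fun u => ?_)
      refine hK3 _ (h ▸ Submodule.mem_top) ?_
      rw [← Module.End.mul_apply, idem_sq]
  · have horb : orb ⊆ occ (ρ.comp ι) := by
      intro c hco
      obtain ⟨⟨τ, g, hg, hτ⟩, -, rfl⟩ := Finset.mem_image.mp hco
      rw [mem_occ]
      intro h0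
      have := idem_conj (ρ.comp ι) a (ρ g) τ (fun x => by
            simp only [MonoidHom.comp_apply, ← map_mul, hτ x])
      have h0' : idem (ρ.comp ι) (a.comp τ.toMonoidHom) = 0 := h0
      rw [h0', mul_zero] at this
      refine (mem_occ _).mp haocc ?_
      have hgg : ρ g * ρ g⁻¹ = 1 := by rw [← map_mul, mul_inv_cancel, map_one]
      rw [← mul_one (idem _ a), ← hgg, ← mul_assoc, ← this, zero_mul]
    have h1 := Finset.card_le_card horb
    rw [horbcard] at h1
    have h2 := card_occ_le (ρ.comp ι)
    have h3 := hc.dim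
    have h4 : Nat.card (autz ι N) ∣ p - 1 := by
      have : IsCyclic P := isCyclic_of_prime_card hP'
      have h5 := Subgroup.card_subgroup_dvd_card (autz ι N)
      rwa [IsCyclic.card_mulAut, hP', Nat.totient_prime hc.hp] at h5
    obtain ⟨m, hm⟩ := h4
    have hm3 : 3 ≤ m := by
      by_contra hlt
      have : m ≤ 2 := by omega
      have : Nat.card (autz ι N) * m ≤ Nat.card (autz ι N) * 2 := Nat.mul_le_mul_left _ this
      omega
    rw [hm, mul_comm]
    exact Nat.mul_le_mul_left _ hm3

lemma aeval_mem_ord {ι' : Type*} (R : Subring (Module.End ℂ V)) (hR : ∀ c ∈ O, ∀ T ∈ R, c • T ∈ R)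
    (c : ι' → ℂ) (hc : ∀ i, c i ∈ O) (T : Module.End ℂ V) (hT : T ∈ R) (S : Finset ι') :
    Polynomial.aeval T (∏ i ∈ S, (Polynomial.X - Polynomial.C (c i))) ∈ R := by
  classical
  induction S using Finset.induction_on with
  | empty => simp [R.one_mem]
  | insert i S hi ih =>
    rw [Finset.prod_insert hi, map_mul]
    refine R.mul_mem ?_ ih
    rw [map_sub, Polynomial.aeval_X, Polynomial.aeval_C, Algebra.algebraMap_eq_smul_one]
    exact R.sub_mem hT (hR _ (hc i) _ R.one_mem)

lemma aeval_idem (σ : P →* Module.End ℂ V) (a : P →* ℂˣ) (x : P) (q : Polynomial ℂ) :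
    Polynomial.aeval (σ x) q * idem σ a = (q.eval (a x : ℂ)) • idem σ a := by
  ext u
  have h1 := aeval_intertwine (idem σ a) ((a x : ℂ) • 1) (σ x) (fun u => by
    have := LinearMap.congr_fun (sig_mul_idem σ a x) u
    simpa using this.symm) q u
  rw [Module.End.mul_apply, ← h1]
  have h3 : Polynomial.aeval ((a x : ℂ) • (1 : Module.End ℂ V)) q = algebraMap ℂ _ (q.eval (a x : ℂ)) := by
    rw [← Algebra.algebraMap_eq_smul_one, Polynomial.aeval_algebraMap_apply]
    simp
  rw [h3]
  simp

/-- case `f = 1` -/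
lemma core_sep_one (hc : Core p O ι N ρ)
    (hP : Fintype.card P = p) (l : P →* ℂˣ) (hl : l ≠ 1) :
    ∃ K : Submodule ℂ (Module.End ℂ V), (∀ g, ∀ u ∈ K, ad ρ g u ∈ K) ∧
      LinearMap.range (idem ((ad ρ).comp ι) 1) ≤ K ∧
      ∀ u ∈ K, idem ((ad ρ).comp ι) l u = u → u = 0 := by
  classical
  obtain ⟨ζ, hζ⟩ : ∃ ζ : ℂ, IsPrimitiveRoot ζ p :=
    ⟨_, Complex.isPrimitiveRoot_exp p hc.hp.ne_zero⟩
  have hP' : Nat.card P = p := by rw [Nat.card_eq_fintype_card, hP]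
  have hP1 : Fintype.card P = p ^ 1 := by rw [hP, pow_one]
  have : Fintype (autz ι N) := Fintype.ofFinite _
  obtain ⟨e, he1, he2, he3⟩ := core_orb hc hP
  rw [Nat.card_eq_fintype_card] at he3
  have he0 : 0 < e := by rw [← he3]; exact Fintype.card_pos
  obtain ⟨y, hy⟩ : ∃ y : P, y ≠ 1 := by
    have : Nontrivial P := Fintype.one_lt_card_iff_nontrivial.mp (hP ▸ hc.hp.one_lt)
    exact exists_ne 1
  set D := (1 - ζ) ^ ((occ (ρ.comp ι)).card - 1) with hD
  have hDmem := fun l => ad_idem_mem O ρ ι l D (core_D hc hζ hP1)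
  set q : Polynomial ℂ := ∏ τ : autz ι N, (Polynomial.X - Polynomial.C (l ((τ : MulAut P) y) : ℂ))
    with hq
  have hprim : ∀ τ : autz ι N, IsPrimitiveRoot (l ((τ : MulAut P) y) : ℂ) p := by
    intro τ
    have h1 : (l ((τ : MulAut P) y)) ^ p = 1 := by
      rw [← map_pow]
      conv_lhs => rw [← hP, pow_card_eq_one, map_one]
    have h2 : l ((τ : MulAut P) y) ≠ 1 := by
      intro h
      have := char_inj hc.hp hP' l hl (h.trans (map_one l).symm)
      exact hy ((MulEquiv.map_eq_one_iff _).mp this)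
    have : Fact p.Prime := ⟨hc.hp⟩
    rw [IsPrimitiveRoot.coe_units_iff, ← orderOf_eq_prime h1 h2]
    exact IsPrimitiveRoot.orderOf _
  have hOc : ∀ τ : autz ι N, (l ((τ : MulAut P) y) : ℂ) ∈ O := fun τ =>
    (ValuationSubring.valuation_le_one_iff _ _).mp (val_root O hc.hp.ne_zero (hprim τ).pow_eq_one).le
  refine lemK O ι N (ad ρ) hc.ιN hc.free (ordRing O (two ρ))
    (fun g => sig_mem_ord O (two ρ) (g, g)) (fun T hT γ u hu h => ord_ev O _ hT hu h)
    (w := ∑ τ : autz ι N, Polynomial.aeval (ad ρ (ι ((τ : MulAut P) y))) q)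
    (sum_mem fun τ _ => aeval_mem_ord _ (fun _ h _ h' => smul_mem_ord O _ h h') _ hOc _
      (sig_mem_ord O (two ρ) (_, _)) _)
    ?_ 1 l (e * q.eval 1) 0 ?_ ?_ (D ^ 2) (hDmem _) (hDmem _) ?_
  · intro g hg
    obtain ⟨τ, hτ⟩ := hc.norm g hg
    rw [Finset.mul_sum, Finset.sum_mul]
    refine Fintype.sum_equiv (Equiv.mulLeft (⟨τ, g, hg, hτ⟩ : autz ι N)) _ _ fun τ' => ?_
    ext φ : 1
    refine aeval_intertwine (ad ρ g) _ _ (fun u => ?_) q φ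
    rw [← Module.End.mul_apply, ← Module.End.mul_apply, ← map_mul, ← map_mul, hτ]
    rfl
  · rw [Finset.sum_mul]
    have : ∀ τ ∈ (Finset.univ : Finset (autz ι N)),
        Polynomial.aeval (ad ρ (ι ((τ : MulAut P) y))) q * idem ((ad ρ).comp ι) 1 =
        q.eval 1 • idem ((ad ρ).comp ι) 1 := by
      intro τ _
      have := aeval_idem ((ad ρ).comp ι) 1 ((τ : MulAut P) y) q
      simpa using this
    rw [Finset.sum_congr rfl this, Finset.sum_const, Finset.card_univ, he3, mul_smul,
      Nat.cast_smul_eq_nsmul]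
  · rw [Finset.sum_mul, zero_smul]
    refine Finset.sum_eq_zero fun τ _ => ?_
    have := aeval_idem ((ad ρ).comp ι) l ((τ : MulAut P) y) q
    rw [MonoidHom.comp_apply] at this
    rw [this, hq, Polynomial.eval_prod, Finset.prod_eq_zero (Finset.mem_univ τ), zero_smul]
    simp
  · have h1 : O.valuation (q.eval 1) = O.valuation (1 - ζ) ^ e := by
      rw [hq, Polynomial.eval_prod, map_prod, Finset.prod_congr rfl (g := fun _ => O.valuation (1 - ζ))]
      · rw [Finset.prod_const, Finset.card_univ, he3]
      · intro τ _
        rw [Polynomial.eval_sub, Polynomial.eval_X, Polynomial.eval_C]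
        exact val_one_sub_eq O hc.hp hζ (hprim τ)
    have h2 : O.valuation (e : ℂ) = 1 := val_nat_coprime O hc.hO
      (Nat.coprime_of_lt_prime (by omega) (by omega) hc.hp).symm
    have : O.valuation (D ^ 2 * (e * q.eval 1 - 0)) =
        O.valuation (1 - ζ) ^ (2 * ((occ (ρ.comp ι)).card - 1) + e) := by
      rw [hD, sub_zero, map_mul, map_mul, h1, h2, one_mul, pow_add, map_pow, map_pow, ← pow_mul,
        mul_comm 2]
    rw [this]
    refine card_val hc hζ hP1 _ ?_
    omega

theorem core (hc : Core p O ι N ρ) {f : ℕ} (hf : f ≠ 0) (hP : Fintype.card P = p ^ f)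
    (x y : P) (g : G) : ρ (ι x) * (ρ g * ρ (ι y) * ρ g⁻¹) = (ρ g * ρ (ι y) * ρ g⁻¹) * ρ (ι x) := by
  have hsep : ∀ l : P →* ℂˣ, l ≠ 1 → ∃ K : Submodule ℂ (Module.End ℂ V), (∀ g, ∀ u ∈ K, ad ρ g u ∈ K) ∧
      LinearMap.range (idem ((ad ρ).comp ι) 1) ≤ K ∧
      ∀ u ∈ K, idem ((ad ρ).comp ι) l u = u → u = 0 := by
    intro l hl
    by_cases h1 : f = 1
    · subst h1
      exact core_sep_one hc (by simpa using hP) l hl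
    · exact core_sep_two hc (by omega) hP l hl
  have hinv : ∀ z : P, ρ (ι z) * ρ (ι z)⁻¹ = 1 := fun z => by
    rw [← map_mul, mul_inv_cancel, map_one]
  have hinv' : ∀ z : P, ρ (ι z)⁻¹ * ρ (ι z) = 1 := fun z => by
    rw [← map_mul, inv_mul_cancel, map_one]
  have hφ : idem ((ad ρ).comp ι) 1 (ρ (ι y)) = ρ (ι y) := by
    apply idem_of_fix_apply
    intro z
    have hzy : ι z * ι y = ι y * ι z := by rw [← map_mul, mul_comm, map_mul]
    rw [MonoidHom.comp_apply, ad_apply, ← map_mul, hzy, map_mul, mul_assoc, hinv]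
    simp
  set ψ := ad ρ g (ρ (ι y)) with hψ
  have hz : ∀ l : P →* ℂˣ, l ≠ 1 → idem ((ad ρ).comp ι) l ψ = 0 := by
    intro l hl
    obtain ⟨K, hK1, hK2, hK3⟩ := hsep l hl
    have hψK : ψ ∈ K := hK1 g _ (hK2 ⟨_, hφ⟩)
    refine hK3 _ ?_ (by rw [← Module.End.mul_apply, idem_sq])
    unfold idem
    rw [LinearMap.smul_apply, LinearMap.sum_apply]
    exact K.smul_mem _ (K.sum_mem fun z _ => K.smul_mem _ (hK1 _ _ hψK))
  have h1 : idem ((ad ρ).comp ι) 1 ψ = ψ := by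
    have := LinearMap.congr_fun (sum_idem ((ad ρ).comp ι)) ψ
    rw [LinearMap.sum_apply, Finset.sum_eq_single 1] at this
    · exact this
    · exact fun l _ hl => hz l hl
    · simp
  have h2 : ad ρ (ι x) ψ = ψ := by
    have := LinearMap.congr_fun (sig_mul_idem ((ad ρ).comp ι) 1 x) ψ
    rw [Module.End.mul_apply, LinearMap.smul_apply, h1] at this
    simpa using this
  rw [ad_apply] at h2
  have h3 : ρ (ι x) * ψ = ψ * ρ (ι x) := by
    conv_rhs => rw [← h2, mul_assoc, hinv', mul_one]
  rw [hψ, ad_apply] at h3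
  exact h3

end Thompson


namespace Thompson

/-- restriction of a representation to a stable subspace -/
noncomputable def subRep {G V : Type*} [Group G] [AddCommGroup V] [Module ℂ V]
    (ρ : G →* Module.End ℂ V) (K : Submodule ℂ V) (hK : ∀ g, ∀ u ∈ K, ρ g u ∈ K) :
    G →* Module.End ℂ K where
  toFun g := (ρ g).restrict (hK g)
  map_one' := by ext u; simp
  map_mul' g h := by ext u; simp

/-- quotient representation -/
noncomputable def quoRep {G V : Type*} [Group G] [AddCommGroup V] [Module ℂ V]
    (ρ : G →* Module.End ℂ V) (K : Submodule ℂ V) (hK : ∀ g, ∀ u ∈ K, ρ g u ∈ K) :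
    G →* Module.End ℂ (V ⧸ K) where
  toFun g := K.mapQ K (ρ g) (hK g)
  map_one' := by ext u; simp
  map_mul' g h := by ext u; simp

def FTprop (p n : ℕ) : Prop :=
  ∀ (V : Type) [AddCommGroup V] [Module ℂ V] [FiniteDimensional ℂ V] (G : Type) [Group G] [Finite G]
    (ρ : G →* Module.End ℂ V), Module.finrank ℂ V = n → 2 * n + 1 < p →
    ∀ (x y : G) (i j : ℕ), x ^ p ^ i = 1 → y ^ p ^ j = 1 → ρ x * ρ y = ρ y * ρ x

lemma unip {V : Type*} [AddCommGroup V] [Module ℂ V] (c : Module.End ℂ V) {m : ℕ} (hm : m ≠ 0)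
    (h : c ^ m = 1) (h2 : (c - 1) * (c - 1) = 0) : c = 1 := by
  have key : ∀ k : ℕ, c ^ k = 1 + (k : ℂ) • (c - 1) := by
    intro k
    induction k with
    | zero => simp
    | succ k ih =>
      have hc : c = 1 + (c - 1) := by abel
      rw [pow_succ, ih]
      conv_lhs => rw [hc]
      rw [add_sub_cancel_left, mul_add, add_mul (1 : Module.End ℂ V) _ (c - 1), mul_one, one_mul, smul_mul_assoc, h2]
      push_cast
      rw [add_smul]
      simp
      abel
  have := key m
  rw [h, left_eq_add, smul_eq_zero] at this
  rcases this with h3 | h3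
  · exact absurd (by exact_mod_cast h3) hm
  · exact sub_eq_zero.mp h3

lemma FTred {p n : ℕ} (IH : ∀ m < n, FTprop p m)
    {V : Type} [AddCommGroup V] [Module ℂ V] [FiniteDimensional ℂ V] {G : Type} [Group G] [Finite G]
    (ρ : G →* Module.End ℂ V) (hn : Module.finrank ℂ V = n) (hnp : 2 * n + 1 < p)
    (K : Submodule ℂ V) (hK : ∀ g, ∀ u ∈ K, ρ g u ∈ K) (hb : K ≠ ⊥) (ht : K ≠ ⊤)
    (x y : G) (i j : ℕ) (hx : x ^ p ^ i = 1) (hy : y ^ p ^ j = 1) : ρ x * ρ y = ρ y * ρ x := by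
  have hlt : Module.finrank ℂ K < n := hn ▸ Submodule.finrank_lt ht
  have hpos : 0 < Module.finrank ℂ K := Nat.pos_of_ne_zero fun h => hb (Submodule.finrank_eq_zero.mp h)
  have hadd := K.finrank_quotient_add_finrank
  have h1 := IH _ hlt K G (subRep ρ K hK) rfl (by omega) x y i j hx hy
  have h2 := IH (Module.finrank ℂ (V ⧸ K)) (by omega) (V ⧸ K) G (quoRep ρ K hK) rfl (by omega)
    x y i j hx hy
  have hK1 : ∀ u ∈ K, ρ x (ρ y u) = ρ y (ρ x u) := by
    intro u hu
    exact congrArg Subtype.val (LinearMap.congr_fun h1 ⟨u, hu⟩)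
  have hK2 : ∀ u, ρ x (ρ y u) - ρ y (ρ x u) ∈ K := by
    intro u
    have := LinearMap.congr_fun h2 (K.mkQ u)
    exact (Submodule.Quotient.eq K).mp this
  have hc : ρ (x * y * (y * x)⁻¹) = 1 := by
    refine unip _ (m := Nat.card G) Nat.card_pos.ne' (by rw [← map_pow, pow_card_eq_one', map_one]) ?_
    have hu : ∀ u, ∃ u', u = ρ (y * x) u' := fun u => ⟨ρ (y * x)⁻¹ u, by
      rw [← Module.End.mul_apply, ← map_mul, mul_inv_cancel, map_one]; rfl⟩
    have e : ∀ u', (ρ (x * y * (y * x)⁻¹) - 1) (ρ (y * x) u') = ρ x (ρ y u') - ρ y (ρ x u') := by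
      intro u'
      rw [LinearMap.sub_apply, ← Module.End.mul_apply, ← map_mul, inv_mul_cancel_right]
      simp
    ext u
    obtain ⟨u', rfl⟩ := hu u
    rw [Module.End.mul_apply, e]
    obtain ⟨w, hw⟩ : ∃ w, w = ρ x (ρ y u') - ρ y (ρ x u') := ⟨_, rfl⟩
    have hwK : w ∈ K := hw ▸ hK2 u'
    rw [← hw]
    have hw' : w = ρ (y * x) (ρ (y * x)⁻¹ w) := by
      rw [← Module.End.mul_apply, ← map_mul, mul_inv_cancel, map_one]; rfl
    rw [hw', e, hK1 _ (hK _ _ hwK), sub_self]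
    rfl
  have : ρ x * ρ y = ρ (x * y * (y * x)⁻¹) * ρ (y * x) := by
    rw [← map_mul, ← map_mul, inv_mul_cancel_right]
  rw [this, hc, one_mul, map_mul]

/-- idempotent range is proper -/
lemma range_idem_lt {P : Type*} [CommGroup P] [Fintype P] {V : Type*} [AddCommGroup V] [Module ℂ V]
    [FiniteDimensional ℂ V] (σ : P →* Module.End ℂ V) (a : P →* ℂˣ) (h : idem σ a ≠ 1) :
    Module.finrank ℂ (LinearMap.range (idem σ a)) < Module.finrank ℂ V := by
  refine Submodule.finrank_lt fun ht => h ?_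
  ext u
  obtain ⟨u', rfl⟩ : u ∈ LinearMap.range (idem σ a) := ht ▸ Submodule.mem_top
  rw [← Module.End.mul_apply, idem_sq]; rfl

lemma scalar_p {p n i : ℕ} (hp : p.Prime) (hn : 0 < n) (hnp : n < p) (z : ℂ) (h1 : z ^ n = 1)
    (h2 : z ^ p ^ i = 1) : z = 1 := by
  have hco : Nat.Coprime n (p ^ i) :=
    Nat.Coprime.pow_right _ (Nat.coprime_of_lt_prime (by omega) hnp hp).symm
  have := orderOf_dvd_of_pow_eq_one h1
  have h3 := Nat.dvd_gcd this (orderOf_dvd_of_pow_eq_one h2)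
  rw [hco, Nat.dvd_one, orderOf_eq_one_iff] at h3
  exact h3

lemma FT_TI0 {p n : ℕ} (hp : p.Prime) (IH : ∀ m < n, FTprop p m)
    {V : Type} [AddCommGroup V] [Module ℂ V] [FiniteDimensional ℂ V] {G : Type} [Group G] [Finite G]
    (ρ : G →* Module.End ℂ V) (hn : Module.finrank ℂ V = n) (hn0 : 0 < n) {k : ℕ} (hnp : 2 * n + 1 < p)
    (hinj : Function.Injective ρ) (hdet : ∀ g, LinearMap.det (ρ g) = 1)
    {Q : Type} [CommGroup Q] [Fintype Q] (ι : Q →* G) (q' : Q) (hgen : ∀ x, ∃ m : ℤ, x = q' ^ m)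
    (hq' : q' ^ p ^ k = 1) (q : G) (hqq : ι q' = q) (hq1 : q ≠ 1)
    (x y : G) {i j : ℕ} (hx : x ^ p ^ i = 1) (hy : y ^ p ^ j = 1) (hxq : x * q = q * x)
    (hyq : y * q = q * y) : x * y = y * x := by
  classical
  let σ := ρ.comp ι
  have hcomm : ∀ g, g * q = q * g → ∀ a : Q →* ℂˣ, ρ g * idem σ a = idem σ a * ρ g := by
    intro g hg a
    have h1 := idem_conj σ a (ρ g) (MulEquiv.refl _) (by
      intro x
      obtain ⟨m, rfl⟩ := hgen x
      change ρ g * ρ (ι (q' ^ m)) = ρ (ι (q' ^ m)) * ρ g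
      rw [map_zpow, hqq]
      rw [← map_mul, ← map_mul]
      have : Commute g q := hg
      rw [(this.zpow_right m).eq])
    simpa using h1
  have hne : ∀ a : Q →* ℂˣ, idem σ a ≠ 1 := by
    intro a ha
    have h1 : ρ q = (a q' : ℂ) • 1 := by
      have := sig_mul_idem σ a q'
      rw [ha, mul_one] at this
      rw [← hqq]; exact this
    have h2 : (a q' : ℂ) = 1 := by
      refine scalar_p hp hn0 (by omega) _ (i := k) ?_ ?_
      · have := hdet q
        rw [h1, LinearMap.det_smul, hn] at this
        simpa using this
      · rw [← Units.val_pow_eq_pow_val, ← map_pow, hq', map_one, Units.val_one]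
    rw [h2, one_smul, ← map_one ρ] at h1
    exact hq1 (hinj h1)
  let H := Subgroup.centralizer {q}
  have hH : ∀ g, g ∈ H ↔ g * q = q * g := by
    intro g
    exact Subgroup.mem_centralizer_singleton_iff
  have key : ∀ a : Q →* ℂˣ, (ρ x * ρ y) * idem σ a = (ρ y * ρ x) * idem σ a := by
    intro a
    set K := LinearMap.range (idem σ a) with hKdef
    have hK : ∀ g : H, ∀ u ∈ K, (ρ.comp H.subtype) g u ∈ K := by
      rintro ⟨g, hg⟩ _ ⟨u, rfl⟩
      refine ⟨ρ g u, ?_⟩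
      have := LinearMap.congr_fun (hcomm g ((hH g).mp hg) a) u
      exact this.symm
    have hlt : Module.finrank ℂ K < n := hn ▸ range_idem_lt σ a (hne a)
    have := IH _ hlt K H (subRep (ρ.comp H.subtype) K hK) rfl (by omega)
      ⟨x, (hH x).mpr hxq⟩ ⟨y, (hH y).mpr hyq⟩ i j (Subtype.ext hx) (Subtype.ext hy)
    ext u
    exact congrArg Subtype.val (LinearMap.congr_fun this ⟨idem σ a u, u, rfl⟩)
  apply hinj
  rw [map_mul, map_mul, ← mul_one (ρ x * ρ y), ← mul_one (ρ y * ρ x), ← sum_idem σ, Finset.mul_sum,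
    Finset.mul_sum]
  exact Finset.sum_congr rfl fun a _ => key a

lemma FT_TI {p n : ℕ} (hp : p.Prime) (IH : ∀ m < n, FTprop p m)
    {V : Type} [AddCommGroup V] [Module ℂ V] [FiniteDimensional ℂ V] {G : Type} [Group G] [Finite G]
    (ρ : G →* Module.End ℂ V) (hn : Module.finrank ℂ V = n) (hn0 : 0 < n) (hnp : 2 * n + 1 < p)
    (hinj : Function.Injective ρ) (hdet : ∀ g, LinearMap.det (ρ g) = 1)
    (q : G) (hq1 : q ≠ 1) {k : ℕ} (hq : q ^ p ^ k = 1)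
    (x y : G) {i j : ℕ} (hx : x ^ p ^ i = 1) (hy : y ^ p ^ j = 1) (hxq : x * q = q * x)
    (hyq : y * q = q * y) : x * y = y * x := by
  have : Fintype (Subgroup.zpowers q) := Fintype.ofFinite _
  let cg : CommGroup (Subgroup.zpowers q) :=
    { (inferInstance : Group (Subgroup.zpowers q)) with
      mul_comm := by
        rintro ⟨_, a, rfl⟩ ⟨_, b, rfl⟩
        apply Subtype.ext
        exact zpow_mul_comm q a b }
  refine FT_TI0 hp IH ρ hn hn0 (k := k) hnp hinj hdet (Q := Subgroup.zpowers q)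
    (Subgroup.zpowers q).subtype ⟨q, Subgroup.mem_zpowers q⟩ ?_ (Subtype.ext hq) q rfl hq1 x y hx hy hxq hyq
  rintro ⟨_, m, rfl⟩
  exact ⟨m, Subtype.ext rfl⟩

lemma FTirr {p n : ℕ} (hp : p.Prime) (IH : ∀ m < n, FTprop p m)
    {V : Type} [AddCommGroup V] [Module ℂ V] [FiniteDimensional ℂ V] {G : Type} [Group G] [Finite G]
    (ρ : G →* Module.End ℂ V) (hn : Module.finrank ℂ V = n) (hn0 : 0 < n) (hnp : 2 * n + 1 < p)
    (hinj : Function.Injective ρ) (hdet : ∀ g, LinearMap.det (ρ g) = 1)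
    (hirr : ∀ K : Submodule ℂ V, (∀ g, ∀ u ∈ K, ρ g u ∈ K) → K = ⊥ ∨ K = ⊤)
    (x y : G) {i j : ℕ} (hx : x ^ p ^ i = 1) (hy : y ^ p ^ j = 1) : x * y = y * x := by
  have : Fact p.Prime := ⟨hp⟩
  have : Fintype G := Fintype.ofFinite _
  obtain ⟨P⟩ : Nonempty (Sylow p G) := inferInstance
  have hTI := fun q hq1 k hq x y i j hx hy h1 h2 =>
    FT_TI hp IH ρ hn hn0 hnp hinj hdet q hq1 (k := k) hq x y (i := i) (j := j) hx hy h1 h2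
  have hPpow : ∀ z ∈ P, ∃ k, z ^ p ^ k = 1 := by
    intro z hz
    obtain ⟨k, hk⟩ := P.isPGroup' ⟨z, hz⟩
    exact ⟨k, congrArg Subtype.val hk⟩
  -- p-elements of the normalizer lie in P
  have hnorm : ∀ z k, z ^ p ^ k = 1 → z ∈ Subgroup.normalizer (P : Set G) → z ∈ P := by
    intro z k hz hzN
    have hpg : IsPGroup p (Subgroup.zpowers z) := by
      rw [IsPGroup.iff_orderOf]
      rintro ⟨_, m, rfl⟩
      have h1 : (z ^ m) ^ p ^ k = 1 := by
        rw [← zpow_natCast, ← _root_.zpow_mul, mul_comm, _root_.zpow_mul, zpow_natCast, hz, _root_.one_zpow]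
      obtain ⟨l, -, hl⟩ := (Nat.dvd_prime_pow hp).mp (orderOf_dvd_of_pow_eq_one h1)
      exact ⟨l, by rw [← hl, ← Subgroup.orderOf_coe]⟩
    have h2 := hpg.inf_normalizer_sylow P
    have h3 : z ∈ Subgroup.zpowers z ⊓ (P : Subgroup G) := by
      rw [← h2]; exact ⟨Subgroup.mem_zpowers z, hzN⟩
    exact h3.2
  have hab : ∀ a ∈ P, ∀ b ∈ P, a * b = b * a := by
    intro a ha b hb
    by_cases htriv : Nontrivial P
    · obtain ⟨⟨q, hq⟩, hq1⟩ := @exists_ne _ P.isPGroup'.center_nontrivial 1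
      obtain ⟨k, hk⟩ := hPpow q q.2
      obtain ⟨i, hi⟩ := hPpow a ha
      obtain ⟨j, hj⟩ := hPpow b hb
      have hqc := fun (z : P) => congrArg Subtype.val (Subgroup.mem_center_iff.mp hq z)
      exact hTI q (fun h => hq1 (Subtype.ext (Subtype.ext h))) k hk a b i j hi hj
        (hqc ⟨a, ha⟩) (hqc ⟨b, hb⟩)
    · have := not_nontrivial_iff_subsingleton.mp htriv
      have h1 : (⟨a, ha⟩ : P) = ⟨b, hb⟩ := Subsingleton.elim _ _
      have h2 : a = b := congrArg Subtype.val h1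
      rw [h2]
  have hC : ∀ q ∈ P, q ≠ 1 → ∀ z k, z ^ p ^ k = 1 → z * q = q * z → z ∈ P := by
    intro q hq hq1 z k hz hzq
    refine hnorm z k hz ?_
    refine Subgroup.mem_normalizer_fintype fun b hb => ?_
    obtain ⟨l, hl⟩ := hPpow q hq
    obtain ⟨j, hj⟩ := hPpow b hb
    rw [hTI q hq1 l hl z b k j hz hj hzq (hab b hb q hq), mul_inv_cancel_right]
    exact hb
  have hconj : ∀ (z : G) k (h : G), z ^ p ^ k = 1 → (h * z * h⁻¹) ^ p ^ k = 1 := by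
    intro z k h hz
    rw [conj_pow, hz, mul_one, mul_inv_cancel]
  have hnormal : ∀ g : G, g ∈ Subgroup.normalizer (P : Set G) := by
    intro g
    refine Subgroup.mem_normalizer_fintype fun b hb => ?_
    by_cases htriv : Nontrivial P
    swap
    · have := not_nontrivial_iff_subsingleton.mp htriv
      have h1 : (⟨b, hb⟩ : P) = 1 := Subsingleton.elim _ _
      have h2 : b = 1 := congrArg Subtype.val h1
      rw [h2, mul_one, mul_inv_cancel]
      exact P.one_mem
    obtain ⟨⟨q, hq⟩, hq1⟩ := exists_ne (1 : P)
    obtain ⟨k, hk⟩ := hPpow b hb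
    refine hC q hq (fun h => hq1 (Subtype.ext h)) _ k (hconj _ _ _ hk) ?_
    have : Fintype P := Fintype.ofFinite _
    let cg : CommGroup P :=
      { (inferInstance : Group P) with
        mul_comm := fun a b => Subtype.ext (hab a a.2 b b.2) }
    obtain ⟨O, hO⟩ := exists_val p hp
    have hcore : Core p O (P := P) (Subgroup.subtype (P : Subgroup G))
        (Subgroup.normalizer (P : Set G)) ρ :=
      { hp := hp
        hO := hO
        ιN := fun x => Subgroup.le_normalizer x.2
        free := by
          rintro h hh ⟨x, hx⟩ hxN
          by_contra hx1
          have hx1' : x ≠ 1 := fun h => hx1 (Subtype.ext h)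
          have hxN' : h⁻¹ * x * h ∈ Subgroup.normalizer (P : Set G) := hxN
          obtain ⟨l, hl⟩ := hPpow x hx
          have hxP : h⁻¹ * x * h ∈ P := by
            refine hnorm _ l ?_ hxN'
            have := hconj x l h⁻¹ hl
            rwa [inv_inv] at this
          apply hh
          refine Subgroup.mem_normalizer_fintype fun b hb => ?_
          obtain ⟨j, hj⟩ := hPpow b hb
          refine hC x hx hx1' _ j (hconj _ _ _ hj) ?_
          have h3 := hab b hb _ hxP
          calc h * b * h⁻¹ * x = h * (b * (h⁻¹ * x * h)) * h⁻¹ := by group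
            _ = h * ((h⁻¹ * x * h) * b) * h⁻¹ := by rw [h3]
            _ = x * (h * b * h⁻¹) := by group
        norm := by
          intro g hg
          refine ⟨(P : Subgroup G).normalizerMonoidHom ⟨g, hg⟩, fun x => ?_⟩
          change g * (x : G) = (g * (x : G) * g⁻¹) * g
          group
        faith := by
          intro x hx
          rw [← map_one ρ] at hx
          exact Subtype.ext (hinj hx)
        irr := hirr
        dim := hn ▸ hnp }
    obtain ⟨f, hf⟩ := IsPGroup.iff_card.mp P.isPGroup'
    have hf0 : f ≠ 0 := by
      rintro rfl
      rw [pow_zero] at hf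
      have := (Nat.card_eq_one_iff_unique.mp hf).1
      exact not_nontrivial P htriv
    rw [Nat.card_eq_fintype_card] at hf
    have := core hcore hf0 hf ⟨q, hq⟩ ⟨b, hb⟩ g
    change ρ q * (ρ g * ρ b * ρ g⁻¹) = (ρ g * ρ b * ρ g⁻¹) * ρ q at this
    apply hinj
    simp only [map_mul]
    exact this.symm
  exact hab x (hnorm x i hx (hnormal x)) y (hnorm y j hy (hnormal y))

end Thompson


namespace Thompson
set_option linter.unusedSectionVars false

section DetG
variable {V : Type} [AddCommGroup V] [Module ℂ V] [FiniteDimensional ℂ V] {G : Type} [Group G]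

/-- scalar multiples of elements of `ρ(G)` with determinant one -/
noncomputable def detG (ρ : G →* Module.End ℂ V) : Subgroup (Module.End ℂ V)ˣ where
  carrier := {u | LinearMap.det (u : Module.End ℂ V) = 1 ∧
    ∃ (g : G) (c : ℂˣ), (u : Module.End ℂ V) = (c : ℂ) • ρ g}
  one_mem' := ⟨by simp, 1, 1, by simp⟩
  mul_mem' := by
    rintro u w ⟨h1, g, c, h2⟩ ⟨h3, g', c', h4⟩
    refine ⟨by simp [h1, h3], g * g', c * c', ?_⟩
    rw [Units.val_mul, h2, h4, map_mul, smul_mul_smul_comm, Units.val_mul]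
  inv_mem' := by
    rintro u ⟨h1, g, c, h2⟩
    have h5 : ((u⁻¹ : (Module.End ℂ V)ˣ) : Module.End ℂ V) = ((c⁻¹ : ℂˣ) : ℂ) • ρ g⁻¹ := by
      apply Units.inv_eq_of_mul_eq_one_right
      rw [h2, smul_mul_smul_comm, ← map_mul, mul_inv_cancel, map_one]
      simp
    refine ⟨?_, g⁻¹, c⁻¹, h5⟩
    have h3 : LinearMap.det ((u : Module.End ℂ V) * ((u⁻¹ : (Module.End ℂ V)ˣ) : Module.End ℂ V)) = 1 := by
      simp
    rwa [map_mul, h1, one_mul] at h3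

variable (ρ : G →* Module.End ℂ V)

noncomputable def detRep : detG ρ →* Module.End ℂ V :=
  (Units.coeHom (Module.End ℂ V)).comp (detG ρ).subtype

lemma detRep_apply (u : detG ρ) : detRep ρ u = ((u : (Module.End ℂ V)ˣ) : Module.End ℂ V) := rfl

lemma detRep_inj : Function.Injective (detRep ρ) := fun u w h => by
  apply Subtype.ext
  exact Units.ext h

lemma detRep_det (u : detG ρ) : LinearMap.det (detRep ρ u) = 1 := u.2.1

lemma detRep_form (u : detG ρ) : ∃ (g : G) (c : ℂˣ), detRep ρ u = (c : ℂ) • ρ g := u.2.2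

lemma detG_mk (g : G) (c : ℂˣ) (h : (c : ℂ) ^ Module.finrank ℂ V * LinearMap.det (ρ g) = 1) :
    ∃ u : detG ρ, detRep ρ u = (c : ℂ) • ρ g := by
  have hg : ρ g * ρ g⁻¹ = 1 := by rw [← map_mul, mul_inv_cancel, map_one]
  have hg' : ρ g⁻¹ * ρ g = 1 := by rw [← map_mul, inv_mul_cancel, map_one]
  refine ⟨⟨⟨(c : ℂ) • ρ g, ((c⁻¹ : ℂˣ) : ℂ) • ρ g⁻¹, ?_, ?_⟩, ?_, g, c, rfl⟩, rfl⟩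
  · rw [smul_mul_smul_comm, hg]; simp
  · rw [smul_mul_smul_comm, hg']; simp
  · change LinearMap.det ((c : ℂ) • ρ g) = 1
    rw [LinearMap.det_smul, h]

lemma det_ne (g : G) : LinearMap.det (ρ g) ≠ 0 := by
  intro h
  have : LinearMap.det (ρ g) * LinearMap.det (ρ g⁻¹) = 1 := by
    rw [← map_mul, ← map_mul, mul_inv_cancel, map_one, map_one]
  rw [h, zero_mul] at this
  exact zero_ne_one this

lemma detG_cover (hn : 0 < Module.finrank ℂ V) (g : G) :
    ∃ (c : ℂˣ) (u : detG ρ), detRep ρ u = (c : ℂ) • ρ g := by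
  obtain ⟨z, hz⟩ := IsAlgClosed.exists_pow_nat_eq (LinearMap.det (ρ g))⁻¹ hn
  have hz0 : z ≠ 0 := by
    rintro rfl
    rw [zero_pow hn.ne'] at hz
    exact inv_ne_zero (det_ne ρ g) hz.symm
  obtain ⟨u, hu⟩ := detG_mk ρ g (Units.mk0 z hz0) (by
    rw [Units.val_mk0, hz, inv_mul_cancel₀ (det_ne ρ g)])
  exact ⟨_, u, hu⟩

lemma detG_finite [Finite G] (hn : 0 < Module.finrank ℂ V) : Finite (detG ρ) := by
  have : NeZero (Nat.card G * Module.finrank ℂ V) :=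
    ⟨Nat.mul_ne_zero Nat.card_pos.ne' hn.ne'⟩
  have hex : ∀ u : detG ρ, ∃ x : G × rootsOfUnity (Nat.card G * Module.finrank ℂ V) ℂ,
      detRep ρ u = ((x.2 : ℂˣ) : ℂ) • ρ x.1 := by
    intro u
    obtain ⟨g, c, h⟩ := detRep_form ρ u
    refine ⟨(g, ⟨c, ?_⟩), h⟩
    rw [mem_rootsOfUnity]
    have h1 := detRep_det ρ (u ^ Nat.card G)
    rw [map_pow, h, smul_pow, ← map_pow, pow_card_eq_one', map_one, LinearMap.det_smul, map_one,
      mul_one, ← pow_mul] at h1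
    exact Units.ext (by simpa using h1)
  choose F hF using hex
  refine Finite.of_injective F fun u w h => detRep_inj ρ ?_
  rw [hF, hF, h]

lemma detG_p {p : ℕ} (hp : p.Prime) (hn : 0 < Module.finrank ℂ V) (hnp : Module.finrank ℂ V < p)
    (x : G) (m : ℕ) (hx : x ^ p ^ m = 1) :
    ∃ (c : ℂˣ) (u : detG ρ), detRep ρ u = (c : ℂ) • ρ x ∧ u ^ p ^ m = 1 := by
  set n := Module.finrank ℂ V with hndef
  have hco : Nat.Coprime n (p ^ m) :=
    Nat.Coprime.pow_right _ (Nat.coprime_of_lt_prime (by omega) hnp hp).symm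
  set δ : ℂˣ := Units.mk0 _ (det_ne ρ x) with hδ
  have hδp : δ ^ p ^ m = 1 := by
    apply Units.ext
    rw [Units.val_pow_eq_pow_val, hδ, Units.val_mk0, ← map_pow, ← map_pow, hx, map_one, map_one]
    rfl
  obtain ⟨d, hd, hdp⟩ : ∃ d : ℂˣ, d ^ n * δ = 1 ∧ d ^ p ^ m = 1 := by
    refine ⟨(δ ^ (Nat.gcdA n (p ^ m)))⁻¹, ?_, ?_⟩
    · have h1 : δ = (δ ^ (Nat.gcdA n (p ^ m))) ^ n := by
        have h2 : (1 : ℤ) = n * Nat.gcdA n (p ^ m) + (p ^ m : ℕ) * Nat.gcdB n (p ^ m) := by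
          rw [← Nat.gcd_eq_gcd_ab, hco]; rfl
        conv_lhs => rw [← zpow_one δ, h2, _root_.zpow_add, _root_.zpow_mul, _root_.zpow_mul, zpow_natCast,
          zpow_natCast, hδp, _root_.one_zpow, mul_one]
        rw [← zpow_natCast, ← zpow_natCast, ← _root_.zpow_mul, ← _root_.zpow_mul, mul_comm]
      rw [inv_pow, ← h1, inv_mul_cancel]
    · rw [inv_pow, ← zpow_natCast, ← _root_.zpow_mul, mul_comm, _root_.zpow_mul, zpow_natCast, hδp,
        _root_.one_zpow, inv_one]
  obtain ⟨u, hu⟩ := detG_mk ρ x d (by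
    have h1 := congrArg Units.val hd
    rw [Units.val_mul, Units.val_pow_eq_pow_val] at h1
    exact h1)
  refine ⟨d, u, hu, detRep_inj ρ ?_⟩
  rw [map_pow, hu, smul_pow, ← map_pow, hx, map_one, map_one, ← Units.val_pow_eq_pow_val, hdp]
  simp

end DetG

theorem FT (p : ℕ) (hp : p.Prime) (n : ℕ) : FTprop p n := by
  induction n using Nat.strong_induction_on with
  | _ n IH =>
    intro V _ _ _ G _ _ ρ hn hnp x y i j hx hy
    by_cases hn0 : n = 0
    · have : Subsingleton V := Module.finrank_zero_iff.mp (hn.trans hn0)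
      ext u
      exact Subsingleton.elim _ _
    have hn0' : 0 < Module.finrank ℂ V := by omega
    by_cases hirr : ∀ K : Submodule ℂ V, (∀ g, ∀ u ∈ K, ρ g u ∈ K) → K = ⊥ ∨ K = ⊤
    · have := detG_finite ρ hn0'
      obtain ⟨c, u, hu, hup⟩ := detG_p ρ hp hn0' (by omega) x i hx
      obtain ⟨d, w, hw, hwp⟩ := detG_p ρ hp hn0' (by omega) y j hy
      have h1 := FTirr hp IH (detRep ρ) hn (by omega) hnp (detRep_inj ρ) (detRep_det ρ) (by
        intro K hK
        refine hirr K fun g z hz => ?_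
        obtain ⟨c, u, hu⟩ := detG_cover ρ hn0' g
        have := hK u z hz
        rw [hu, LinearMap.smul_apply] at this
        exact (K.smul_mem_iff c.ne_zero).mp this) u w hup hwp
      have h2 := congrArg (detRep ρ) h1
      rw [map_mul, map_mul, hu, hw, smul_mul_smul_comm, smul_mul_smul_comm, mul_comm (d : ℂ)] at h2
      exact smul_right_injective _ (mul_ne_zero c.ne_zero d.ne_zero) h2
    · push Not at hirr
      obtain ⟨K, hK, hb, ht⟩ := hirr
      exact FTred IH ρ hn hnp K hK hb ht x y i j hx hy

end Thompson


namespace Thompson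
set_option linter.unusedSectionVars false

section Coef
variable {n : ℕ} {k : Type*} [CommRing k]

/-- linear substitution -/
noncomputable def linSub (A : Matrix (Fin n) (Fin n) k) :
    MvPolynomial (Fin n) k →ₐ[k] MvPolynomial (Fin n) k :=
  aeval (fun i => ∑ j, A i j • X j)

lemma linSub_X (A : Matrix (Fin n) (Fin n) k) (i : Fin n) : linSub A (X i) = ∑ j, A i j • X j := by
  rw [linSub, aeval_X]

lemma linSub_mul (A B : Matrix (Fin n) (Fin n) k) (f : MvPolynomial (Fin n) k) :
    linSub (A * B) f = linSub B (linSub A f) := by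
  have : linSub (A * B) = (linSub B).comp (linSub A) := by
    apply MvPolynomial.algHom_ext
    intro i
    rw [AlgHom.comp_apply, linSub_X, linSub_X, map_sum]
    simp_rw [map_smul, linSub_X, Matrix.mul_apply, Finset.sum_smul, Finset.smul_sum, smul_smul]
    rw [Finset.sum_comm]
  rw [this]; rfl

/-- the top monomial exponent -/
noncomputable def topE (n p : ℕ) : Fin n →₀ ℕ := Finsupp.equivFunOnFinite.symm fun _ => p - 1

noncomputable def topM (k : Type*) [CommRing k] (n p : ℕ) : MvPolynomial (Fin n) k := ∏ i, X i ^ (p - 1)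

lemma topM_eq (p : ℕ) : topM k n p = monomial (topE n p) 1 := by
  rw [topM, MvPolynomial.monomial_eq, C_1, one_mul, Finsupp.prod_fintype _ _ (by simp)]
  rfl

noncomputable def pId (k : Type*) [CommRing k] (n p : ℕ) : Ideal (MvPolynomial (Fin n) k) :=
  Ideal.span ((fun s => monomial s (1 : k)) '' (Set.range fun i : Fin n => Finsupp.single i p))

lemma mem_pId {p : ℕ} (f : MvPolynomial (Fin n) k) :
    f ∈ pId k n p ↔ ∀ s ∈ f.support, ∃ i, p ≤ s i := by
  rw [pId, mem_ideal_span_monomial_image]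
  simp [Finsupp.single_le_iff]

lemma X_pow_mem (p : ℕ) (i : Fin n) : (X i ^ p : MvPolynomial (Fin n) k) ∈ pId k n p := by
  apply Ideal.subset_span
  exact ⟨_, ⟨i, rfl⟩, (X_pow_eq_monomial ..).symm⟩

lemma coeff_pId {p : ℕ} (hp : 0 < p) {f : MvPolynomial (Fin n) k} (h : f ∈ pId k n p) :
    coeff (topE n p) f = 0 := by
  by_contra hc
  obtain ⟨i, hi⟩ := (mem_pId f).mp h _ (mem_support_iff.mpr hc)
  simp [topE] at hi
  omega

lemma hom_sub_mem {p : ℕ} (hp : 0 < p) {f : MvPolynomial (Fin n) k}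
    (hf : f.IsHomogeneous (n * (p - 1))) : f - C (coeff (topE n p) f) * topM k n p ∈ pId k n p := by
  rw [mem_pId]
  intro s hs
  rw [mem_support_iff, topM_eq, C_mul_monomial, mul_one, coeff_sub, coeff_monomial] at hs
  by_contra! hlt
  by_cases h : topE n p = s
  · subst h; simp at hs
  · rw [if_neg h, sub_zero] at hs
    have h1 := hf hs
    replace h1 : s.degree = n * (p - 1) := by
      rw [Finsupp.degree_eq_weight_one]; exact h1
    apply h
    have h2 : ∑ i : Fin n, s i = ∑ i : Fin n, (p - 1) := by
      rw [← Finsupp.degree_eq_sum]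
      simp [h1]
    have h3 := (Finset.sum_eq_sum_iff_of_le (fun i _ => by have := hlt i; omega)).mp h2
    ext i
    simp [topE, h3 i (Finset.mem_univ _)]

lemma topM_hom (p : ℕ) (A : Matrix (Fin n) (Fin n) k) :
    (linSub A (topM k n p)).IsHomogeneous (n * (p - 1)) := by
  rw [topM, map_prod]
  have := IsHomogeneous.prod (Finset.univ : Finset (Fin n)) (fun i => linSub A (X i ^ (p - 1)))
    (fun _ => p - 1) (fun i _ => by
      rw [map_pow, linSub_X]
      have h : (∑ j, A i j • (X j : MvPolynomial (Fin n) k)).IsHomogeneous 1 :=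
        IsHomogeneous.sum _ _ _ fun j _ => by
          rw [smul_eq_C_mul]
          exact (isHomogeneous_C_mul_X _ _)
      simpa using h.pow (p - 1))
  simpa using this

end Coef

section CoefField
variable {n : ℕ} {k : Type*} [Field k] {p : ℕ} [hp : Fact p.Prime] [CharP k p]

lemma linSub_pId (A : Matrix (Fin n) (Fin n) k) {f : MvPolynomial (Fin n) k} (h : f ∈ pId k n p) :
    linSub A f ∈ pId k n p := by
  have : pId k n p ≤ (pId k n p).comap (linSub A) := by
    rw [pId, Ideal.span_le]
    rintro _ ⟨_, ⟨i, rfl⟩, rfl⟩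
    change linSub A (monomial (Finsupp.single i p) 1) ∈ pId k n p
    rw [← X_pow_eq_monomial, map_pow, linSub_X, sum_pow_char]
    refine Ideal.sum_mem _ fun j _ => ?_
    rw [smul_pow]
    exact Submodule.smul_of_tower_mem _ _ (X_pow_mem p j)
  exact this h

noncomputable def cf (p : ℕ) (A : Matrix (Fin n) (Fin n) k) : k := coeff (topE n p) (linSub A (topM k n p))

lemma coeff_topM : coeff (topE n p) (topM k n p) = 1 := by
  rw [topM_eq, coeff_monomial, if_pos rfl]

lemma cf_mul (A B : Matrix (Fin n) (Fin n) k) : cf p (A * B) = cf p A * cf p B := by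
  have h1 := hom_sub_mem hp.out.pos (topM_hom p A)
  have h2 := coeff_pId hp.out.pos (linSub_pId B h1)
  rw [map_sub, map_mul, ← linSub_mul, coeff_sub, sub_eq_zero] at h2
  rw [cf, h2]
  have : linSub B (C (coeff (topE n p) (linSub A (topM k n p)))) = C (cf p A) := by
    rw [linSub, ← algebraMap_eq, AlgHom.commutes]; rfl
  rw [this, coeff_C_mul]; rfl

lemma cf_diag (D : Fin n → k) : cf p (diagonal D) = (diagonal D).det ^ (p - 1) := by
  have h : linSub (diagonal D) (topM k n p) = C ((diagonal D).det ^ (p - 1)) * topM k n p := by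
    rw [topM, map_prod, det_diagonal, ← Finset.prod_pow, map_prod, ← Finset.prod_mul_distrib]
    refine Finset.prod_congr rfl fun i _ => ?_
    rw [map_pow, linSub_X, Finset.sum_eq_single i]
    · rw [diagonal_apply_eq, smul_eq_C_mul, mul_pow, map_pow]
    · intro j _ hj; rw [diagonal_apply_ne' _ hj, zero_smul]
    · simp
  rw [cf, h, coeff_C_mul, coeff_topM, mul_one]

lemma cf_trans (t : TransvectionStruct (Fin n) k) : cf p t.toMatrix = t.toMatrix.det ^ (p - 1) := by
  obtain ⟨i, j, hij, c⟩ := t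
  rw [TransvectionStruct.det, one_pow, TransvectionStruct.toMatrix_mk]
  have hX : ∀ l, linSub (transvection i j c) (X l) = if l = i then X i + C c * X j else (X l : MvPolynomial (Fin n) k) := by
    intro l
    rw [linSub_X]
    simp only [transvection, Matrix.add_apply, add_smul, Finset.sum_add_distrib]
    have h1 : ∑ x, (1 : Matrix (Fin n) (Fin n) k) l x • (X x : MvPolynomial (Fin n) k) = X l := by
      simp [Matrix.one_apply]
    have h2 : ∑ x, (single i j c : Matrix (Fin n) (Fin n) k) l x • (X x : MvPolynomial (Fin n) k) =
        if l = i then C c * X j else 0 := by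
      rw [Finset.sum_eq_single j]
      · by_cases h : l = i
        · subst h; simp [smul_eq_C_mul]
        · simp [h, Matrix.single, Ne.symm h]
      · intro x _ hx
        simp [Matrix.single, Ne.symm hx]
      · simp
    rw [h1, h2]
    split_ifs with h
    · rw [h]
    · rw [add_zero]
  have hmem : linSub (transvection i j c) (topM k n p) - topM k n p ∈ pId k n p := by
    have e1 : linSub (transvection i j c) (topM k n p) =
        (X i + C c * X j) ^ (p - 1) * ∏ l ∈ Finset.univ.erase i, (X l : MvPolynomial (Fin n) k) ^ (p - 1) := by
      rw [topM, map_prod, ← Finset.mul_prod_erase _ _ (Finset.mem_univ i), map_pow, hX, if_pos rfl]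
      congr 1
      refine Finset.prod_congr rfl fun l hl => ?_
      rw [map_pow, hX, if_neg (Finset.ne_of_mem_erase hl)]
    have e2 : topM k n p =
        X i ^ (p - 1) * ∏ l ∈ Finset.univ.erase i, (X l : MvPolynomial (Fin n) k) ^ (p - 1) := by
      rw [topM, ← Finset.mul_prod_erase _ _ (Finset.mem_univ i)]
    rw [e1, e2, ← sub_mul]
    have hd : (X j : MvPolynomial (Fin n) k) ∣ (X i + C c * X j) ^ (p - 1) - X i ^ (p - 1) := by
      refine dvd_trans ?_ (sub_dvd_pow_sub_pow _ _ _)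
      rw [add_sub_cancel_left]
      exact dvd_mul_left _ _
    have hd2 : (X j : MvPolynomial (Fin n) k) ^ (p - 1) ∣ ∏ l ∈ Finset.univ.erase i, (X l : MvPolynomial (Fin n) k) ^ (p - 1) :=
      Finset.dvd_prod_of_mem (fun l => (X l : MvPolynomial (Fin n) k) ^ (p - 1))
        (Finset.mem_erase.mpr ⟨hij.symm, Finset.mem_univ _⟩)
    have h3 := mul_dvd_mul hd hd2
    rw [← pow_succ', Nat.sub_add_cancel hp.out.pos] at h3
    exact Ideal.mem_of_dvd _ h3 (X_pow_mem p j)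
  have := coeff_pId hp.out.pos hmem
  rw [coeff_sub, coeff_topM, sub_eq_zero] at this
  exact this

lemma cf_eq (A : Matrix (Fin n) (Fin n) k) (hA : A.det ≠ 0) : cf p A = A.det ^ (p - 1) := by
  refine diagonal_transvection_induction_of_det_ne_zero (fun A => cf p A = A.det ^ (p - 1)) A hA
    (fun D _ => cf_diag D) cf_trans fun A B _ _ hA hB => ?_
  rw [cf_mul, hA, hB, det_mul, mul_pow]

end CoefField

section Lattice
variable {V : Type} [AddCommGroup V] [Module ℂ V] [FiniteDimensional ℂ V] {G : Type} [Group G] [Finite G]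

lemma exists_lattice (O : ValuationSubring ℂ) (ρ : G →* Module.End ℂ V) {n : ℕ}
    (hn : Module.finrank ℂ V = n) :
    ∃ e : Module.Basis (Fin n) ℂ V, ∀ g i j, LinearMap.toMatrix e e (ρ g) i j ∈ O := by
  let b : Module.Basis (Fin n) ℂ V := Module.finBasisOfFinrankEq ℂ V hn
  let f : G × Fin n → V := fun t => ρ t.1 (b t.2)
  have : Nonempty (Fin n → G × Fin n) := ⟨fun i => (1, i)⟩
  obtain ⟨s, hs⟩ := Finite.exists_max (fun s : Fin n → G × Fin n => O.valuation (b.det (f ∘ s)))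
  have h0 : b.det (f ∘ s) ≠ 0 := by
    intro h
    have := hs fun i => (1, i)
    have h1 : (f ∘ fun i : Fin n => ((1 : G), i)) = b := by
      ext i; simp [f]
    rw [h1, h, b.det_self, map_one, map_zero] at this
    exact absurd this (by simp)
  obtain ⟨hli, hsp⟩ := (Module.Basis.is_basis_iff_det b).mpr (isUnit_iff_ne_zero.mpr h0)
  let e : Module.Basis (Fin n) ℂ V := Module.Basis.mk hli hsp.ge
  have he : ∀ i, e i = f (s i) := fun i => by simp [e]
  have hee : (e : Fin n → V) = f ∘ s := funext he
  have key : ∀ t i, e.repr (f t) i ∈ O := by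
    intro t i
    have h1 : b.det (Function.update (f ∘ s) i (f t)) = e.repr (f t) i * b.det (f ∘ s) := by
      conv_lhs => rw [← e.sum_repr (f t)]
      rw [AlternatingMap.map_update_sum]
      rw [Finset.sum_eq_single i]
      · rw [AlternatingMap.map_update_smul, smul_eq_mul, hee]
        congr 2
        exact Function.update_eq_self _ _
      · intro j _ hj
        rw [AlternatingMap.map_update_smul, hee, AlternatingMap.map_update_self _ _ hj.symm, smul_zero]
      · simp
    have h2 := hs (Function.update s i t)
    rw [Function.comp_update] at h2
    simp only [h1, map_mul] at h2
    rw [← O.valuation_le_one_iff]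
    by_contra! hc
    have h3 : 0 < O.valuation (b.det (f ∘ s)) := by
      rw [zero_lt_iff]; exact (O.valuation.ne_zero_iff).mpr h0
    exact absurd h2 (not_le.mpr (lt_mul_of_one_lt_left h3 hc))
  refine ⟨e, fun g i j => ?_⟩
  rw [LinearMap.toMatrix_apply, he]
  have : ρ g (f (s j)) = f (g * (s j).1, (s j).2) := by simp [f]
  rw [this]
  exact key _ _

lemma part1 {p : ℕ} (hp : p.Prime) (ρ : G →* Module.End ℂ V) {n : ℕ}
    (hn : Module.finrank ℂ V = n) (hdet : ∀ g, LinearMap.det (ρ g) = 1) (hG : ¬ p ∣ Nat.card G)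
    [Fintype G] :
    ∃ (e : Module.Basis (Fin n) ℂ V) (v : V), ∑ g, ∏ i, (e.repr (ρ g v) i) ^ (p - 1) ≠ 0 := by
  obtain ⟨O, hO⟩ := exists_val p hp
  obtain ⟨e, he⟩ := exists_lattice O ρ hn
  refine ⟨e, ?_⟩
  have : Fact p.Prime := ⟨hp⟩
  let k := IsLocalRing.ResidueField O
  let π : O →+* k := IsLocalRing.residue O
  have hker : ∀ x : O, O.valuation (x : ℂ) < 1 → π x = 0 := fun x hx => by
    rw [IsLocalRing.residue_eq_zero_iff]
    exact (O.valuation_lt_one_iff x).mpr hx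
  have hpk : (p : k) = 0 := by
    have := hker (p : O) (by simpa using hO)
    simpa using this
  have : CharP k p := by
    have := CharP.exists k
    obtain ⟨q, hq⟩ := this
    have h1 : q ∣ p := (CharP.cast_eq_zero_iff k q p).mp hpk
    rcases (Nat.dvd_prime hp).mp h1 with h | h
    · subst h; exact absurd rfl (CharP.char_ne_one k 1)
    · rwa [h] at hq
  let B : G → Matrix (Fin n) (Fin n) O := fun g => Matrix.of fun i j => ⟨_, he g i j⟩
  have hB : ∀ g, (B g).map O.subtype = LinearMap.toMatrix e e (ρ g) := fun g => by
    ext i j; rfl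
  have hBd : ∀ g, (B g).det = 1 := fun g => by
    apply O.subtype_injective
    rw [RingHom.map_det, RingHom.mapMatrix_apply, hB, LinearMap.det_toMatrix, hdet, map_one]
  let F : MvPolynomial (Fin n) O := ∑ g, linSub (B g) (topM O n p)
  have hmapL : ∀ {R S : Type} [CommRing R] [CommRing S] (φ : R →+* S) (A : Matrix (Fin n) (Fin n) R),
      MvPolynomial.map φ (linSub A (topM R n p)) = linSub (A.map φ) (topM S n p) := by
    intro R S _ _ φ A
    simp only [topM, map_prod, map_pow, linSub_X, map_sum, smul_eq_C_mul, map_mul, map_C, map_X,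
      Matrix.map_apply]
  have hF : F ≠ 0 := by
    intro h
    have h1 := congrArg (fun f => coeff (topE n p) (MvPolynomial.map π f)) h
    simp only [F, map_sum, hmapL, map_zero, coeff_zero, coeff_sum] at h1
    have h2 : ∀ g, coeff (topE n p) (linSub ((B g).map π) (topM k n p)) = 1 := fun g => by
      have hd : ((B g).map π).det = 1 := by
        rw [← RingHom.mapMatrix_apply, ← RingHom.map_det, hBd, map_one]
      have := cf_eq (p := p) ((B g).map π) (by rw [hd]; exact one_ne_zero)
      rw [hd, one_pow] at this
      exact this
    simp only [h2] at h1
    rw [Finset.sum_const, Finset.card_univ, nsmul_one, CharP.cast_eq_zero_iff k p,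
      ← Nat.card_eq_fintype_card] at h1
    exact hG h1
  have hFC : MvPolynomial.map O.subtype F ≠ 0 := fun h =>
    hF (MvPolynomial.map_injective _ O.subtype_injective (by rw [h, map_zero]))
  by_contra! hc
  apply hFC
  apply MvPolynomial.funext
  intro x
  rw [map_zero]
  have := hc (e.equivFun.symm x)
  rw [← this]
  simp only [F, map_sum]
  refine Finset.sum_congr rfl fun g _ => ?_
  rw [hmapL, hB, topM, map_prod, map_prod]
  refine Finset.prod_congr rfl fun i _ => ?_
  rw [map_pow, map_pow, linSub_X, map_sum]
  congr 1
  have h4 := congrFun (LinearMap.toMatrix_mulVec_repr e e (ρ g) (e.equivFun.symm x)) i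
  rw [← h4, Matrix.mulVec, dotProduct]
  refine Finset.sum_congr rfl fun j _ => ?_
  rw [smul_eq_C_mul, map_mul, eval_C, eval_X]
  congr 1
  exact (congrFun (e.equivFun.apply_symm_apply x) j).symm

end Lattice

end Thompson


namespace Thompson
set_option linter.unusedSectionVars false

section PolyFn
variable {V W : Type} [AddCommGroup V] [Module ℂ V] [AddCommGroup W] [Module ℂ W]

/-- linear forms as functions -/
noncomputable def linFn (V : Type) [AddCommGroup V] [Module ℂ V] : Submodule ℂ (V → ℂ) :=
  LinearMap.range (LinearMap.ltoFun ℂ V ℂ ℂ)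

lemma mem_linFn (f : V → ℂ) : f ∈ linFn V ↔ ∃ l : V →ₗ[ℂ] ℂ, ∀ v, l v = f v := by
  constructor
  · rintro ⟨l, rfl⟩; exact ⟨l, fun v => rfl⟩
  · rintro ⟨l, h⟩; exact ⟨l, funext h⟩

lemma poly_comp (T : W →ₗ[ℂ] V) (d : ℕ) : ∀ f : V → ℂ, f ∈ linFn V ^ d → (fun w => f (T w)) ∈ linFn W ^ d := by
  let φ : (V → ℂ) →ₐ[ℂ] (W → ℂ) := AlgHom.pi (R := ℂ) fun w => Pi.evalAlgHom ℂ (fun _ : V => ℂ) (T w)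
  have h : (linFn V).map φ.toLinearMap ≤ linFn W := by
    rintro _ ⟨f, hf, rfl⟩
    obtain ⟨l, hl⟩ := (mem_linFn f).mp hf
    exact (mem_linFn _).mpr ⟨l ∘ₗ T, fun w => hl _⟩
  intro f hf
  have h2 : φ f ∈ (linFn V ^ d).map φ.toLinearMap := ⟨f, hf, rfl⟩
  rw [Submodule.map_pow] at h2
  exact pow_le_pow_left' h d h2

lemma poly_prod {ι : Type} (s : Finset ι) (f : ι → V → ℂ) (d : ℕ) (h : ∀ i, f i ∈ linFn V ^ d) :
    ∏ i ∈ s, f i ∈ linFn V ^ (s.card * d) := by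
  classical
  induction s using Finset.induction_on with
  | empty => simp [Submodule.one_le.mp le_rfl]
  | insert a s ha ih =>
    rw [Finset.prod_insert ha, Finset.card_insert_of_notMem ha, add_mul, one_mul, add_comm, pow_add]
    exact Submodule.mul_mem_mul (h a) ih

lemma poly_smul (d : ℕ) : ∀ f ∈ linFn V ^ d, ∀ (c : ℂ) (v : V), f (c • v) = c ^ d * f v := by
  induction d with
  | zero =>
    intro f hf c v
    rw [pow_zero, Submodule.mem_one] at hf
    obtain ⟨y, rfl⟩ := hf
    simp
  | succ d ih =>
    intro f hf
    rw [pow_succ] at hf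
    induction hf using Submodule.mul_induction_on' with
    | mem_mul_mem f hf g hg =>
      intro c v
      obtain ⟨l, hl⟩ := (mem_linFn g).mp hg
      rw [Pi.mul_apply, Pi.mul_apply, ih f hf, ← hl, ← hl, map_smul, smul_eq_mul]
      ring
    | add f _ g _ h1 h2 =>
      intro c v
      rw [Pi.add_apply, Pi.add_apply, h1, h2, mul_add]

lemma poly_mv {n : ℕ} (d : ℕ) : ∀ f ∈ linFn (Fin n → ℂ) ^ d,
    ∃ F : MvPolynomial (Fin n) ℂ, F.IsHomogeneous d ∧ ∀ v, eval v F = f v := by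
  induction d with
  | zero =>
    intro f hf
    rw [pow_zero, Submodule.mem_one] at hf
    obtain ⟨y, rfl⟩ := hf
    exact ⟨C y, isHomogeneous_C _ _, fun v => by simp⟩
  | succ d ih =>
    intro f hf
    rw [pow_succ] at hf
    induction hf using Submodule.mul_induction_on' with
    | mem_mul_mem f hf g hg =>
      obtain ⟨l, hl⟩ := (mem_linFn g).mp hg
      obtain ⟨F, hF, hFe⟩ := ih f hf
      refine ⟨F * ∑ i, C (l (Pi.single i 1)) * X i, hF.mul (IsHomogeneous.sum _ _ _ fun i _ =>
        isHomogeneous_C_mul_X _ _), fun v => ?_⟩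
      rw [map_mul, hFe, Pi.mul_apply, ← hl, map_sum]
      congr 1
      conv_rhs => rw [LinearMap.pi_apply_eq_sum_univ l v]
      refine Finset.sum_congr rfl fun i _ => ?_
      rw [map_mul, eval_C, eval_X, smul_eq_mul, mul_comm]
      congr 2
      ext j
      simp [Pi.single_apply, eq_comm]
    | add f _ g _ h1 h2 =>
      obtain ⟨F, hF, hFe⟩ := h1
      obtain ⟨F', hF', hFe'⟩ := h2
      exact ⟨F + F', hF.add hF', fun v => by rw [map_add, hFe, hFe']; rfl⟩

end PolyFn

/-- existence of a semi-invariant of degree at most `4 n ^ 2` -/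
def Semi {V G : Type} [AddCommGroup V] [Module ℂ V] [Group G] (ρ : G →* Module.End ℂ V) (n : ℕ) : Prop :=
  ∃ (d : ℕ) (f : V → ℂ), 0 < d ∧ d ≤ 4 * n ^ 2 ∧ f ∈ linFn V ^ d ∧ (∃ v, f v ≠ 0) ∧
    ∀ g, ∃ χ : ℂ, ∀ v, f (ρ g v) = χ * f v

section Steps
variable {V : Type} [AddCommGroup V] [Module ℂ V] [FiniteDimensional ℂ V] {G : Type} [Group G] [Finite G]
variable (ρ : G →* Module.End ℂ V) {n : ℕ} 

lemma semi_of_det (hn : Module.finrank ℂ V = n) (hn0 : 0 < n) (h : Semi (detRep ρ) n) : Semi ρ n := by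
  obtain ⟨d, f, h1, h2, h3, h4, h5⟩ := h
  refine ⟨d, f, h1, h2, h3, h4, fun g => ?_⟩
  obtain ⟨c, u, hu⟩ := detG_cover ρ (by omega) g
  obtain ⟨χ, hχ⟩ := h5 u
  refine ⟨((c : ℂ) ^ d)⁻¹ * χ, fun v => ?_⟩
  have := hχ v
  rw [hu, LinearMap.smul_apply, poly_smul d f h3] at this
  rw [mul_assoc, ← this, inv_mul_cancel_left₀ (pow_ne_zero _ c.ne_zero)]

lemma semi_part1 {p : ℕ} (hp : p.Prime) (hn : Module.finrank ℂ V = n) (hn0 : 0 < n)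
    (hdet : ∀ g, LinearMap.det (ρ g) = 1) (hG : ¬ p ∣ Nat.card G) (hp2 : 2 ≤ p)
    (hpn : p ≤ 4 * n + 1) : Semi ρ n := by
  have := Fintype.ofFinite G
  obtain ⟨e, v, hv⟩ := part1 hp ρ hn hdet hG
  refine ⟨n * (p - 1), fun v => ∑ g, ∏ i, (e.repr (ρ g v) i) ^ (p - 1), ?_, ?_, ?_, ⟨v, hv⟩, ?_⟩
  · exact Nat.mul_pos hn0 (by omega)
  · have : p - 1 ≤ 4 * n := by omega
    nlinarith
  · have h1 : (fun v => ∑ g, ∏ i, (e.repr (ρ g v) i) ^ (p - 1)) =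
        ∑ g, ∏ i : Fin n, ((fun v => e.coord i (ρ g v)) ^ (p - 1) : V → ℂ) := by
      ext v
      simp
    rw [h1]
    refine Submodule.sum_mem _ fun g _ => ?_
    have := poly_prod (Finset.univ : Finset (Fin n)) (fun i => ((fun v => e.coord i (ρ g v)) ^ (p - 1) : V → ℂ))
      (p - 1) (fun i => Submodule.pow_mem_pow _ ((mem_linFn _).mpr ⟨e.coord i ∘ₗ ρ g, fun v => rfl⟩) _)
    simpa using this
  · intro g
    refine ⟨1, fun v => ?_⟩
    rw [one_mul]
    refine Fintype.sum_equiv (Equiv.mulRight g) _ _ fun h => ?_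
    simp

lemma semi_imprim (hn : Module.finrank ℂ V = n) {Q : Type} [CommGroup Q] [Fintype Q] (j : Q →* G)
    (hj : ∀ g, ∃ τ : Q ≃* Q, ∀ x, g * j x = j (τ x) * g) (a : Q →* ℂˣ)
    (h0 : idem (ρ.comp j) a ≠ 0) (h1 : idem (ρ.comp j) a ≠ 1)
    (IH : ∀ (W : Type) [AddCommGroup W] [Module ℂ W] [FiniteDimensional ℂ W] (H : Type) [Group H]
      [Finite H] (τ : H →* Module.End ℂ W) (m : ℕ), Module.finrank ℂ W = m → 0 < m → m < n → Semi τ m) :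
    Semi ρ n := by
  classical
  set σ := ρ.comp j with hσ
  set e := idem σ a with he
  have hee : e * e = e := idem_sq σ a
  have hinv : ∀ g, ρ g * ρ g⁻¹ = 1 := fun g => by rw [← map_mul, mul_inv_cancel, map_one]
  have hinv' : ∀ g, ρ g⁻¹ * ρ g = 1 := fun g => by rw [← map_mul, inv_mul_cancel, map_one]
  have hE : ∀ g, ∃ b, ρ g * e * ρ g⁻¹ = idem σ b := by
    intro g
    obtain ⟨τ, hτ⟩ := hj g⁻¹
    refine ⟨a.comp τ.toMonoidHom, ?_⟩
    have := idem_conj σ a (ρ g⁻¹) τ (fun x => by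
      simp only [hσ, MonoidHom.comp_apply, ← map_mul, hτ])
    rw [mul_assoc, ← this, ← mul_assoc, hinv, one_mul]
  let H : Subgroup G :=
    { carrier := {g | ρ g * e = e * ρ g}
      one_mem' := by simp
      mul_mem' := by
        intro x y hx hy
        simp only [Set.mem_ofPred_eq] at *
        rw [map_mul, mul_assoc, hy, ← mul_assoc, hx, mul_assoc]
      inv_mem' := by
        intro x hx
        simp only [Set.mem_ofPred_eq] at *
        calc ρ x⁻¹ * e = ρ x⁻¹ * e * (ρ x * ρ x⁻¹) := by rw [hinv, mul_one]
          _ = ρ x⁻¹ * (e * ρ x) * ρ x⁻¹ := by simp only [mul_assoc]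
          _ = (ρ x⁻¹ * ρ x) * e * ρ x⁻¹ := by rw [← hx]; simp only [mul_assoc]
          _ = _ := by rw [hinv', one_mul] }
  have hH : ∀ g, g ∈ H ↔ ρ g * e = e * ρ g := fun g => Iff.rfl
  have horth : ∀ g h, g⁻¹ * h ∉ H → e * ρ (g⁻¹ * h) * e = 0 := by
    intro g h hgh
    obtain ⟨b, hb⟩ := hE g
    obtain ⟨b', hb'⟩ := hE h
    have hne : b ≠ b' := by
      rintro rfl
      apply hgh
      rw [hH]
      have h2 : ρ g * e * ρ g⁻¹ = ρ h * e * ρ h⁻¹ := hb.trans hb'.symm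
      rw [map_mul]
      calc ρ g⁻¹ * ρ h * e = ρ g⁻¹ * (ρ h * e * ρ h⁻¹) * ρ h := by
            simp only [mul_assoc]; rw [hinv', mul_one]
        _ = (ρ g⁻¹ * ρ g) * e * ρ g⁻¹ * ρ h := by rw [← h2]; simp only [mul_assoc]
        _ = _ := by rw [hinv', one_mul, mul_assoc]
    have h3 := idem_mul_ne σ b b' hne
    rw [← hb, ← hb'] at h3
    rw [map_mul]
    calc e * (ρ g⁻¹ * ρ h) * e = (ρ g⁻¹ * ρ g) * e * (ρ g⁻¹ * ρ h) * e * (ρ h⁻¹ * ρ h) := by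
          rw [hinv', hinv', one_mul, mul_one]
      _ = ρ g⁻¹ * (ρ g * e * ρ g⁻¹ * (ρ h * e * ρ h⁻¹)) * ρ h := by simp only [mul_assoc]
      _ = 0 := by rw [h3, mul_zero, zero_mul]
  set K := LinearMap.range e with hK
  have hKfix : ∀ u ∈ K, e u = u := by
    rintro _ ⟨u, rfl⟩
    rw [← Module.End.mul_apply, hee]
  have hKst : ∀ g : H, ∀ u ∈ K, (ρ.comp H.subtype) g u ∈ K := by
    rintro g _ ⟨u, rfl⟩
    refine ⟨ρ g u, ?_⟩
    rw [← Module.End.mul_apply, ← (hH g).mp g.2]; rfl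
  let τ := subRep (ρ.comp H.subtype) K hKst
  have hτ : ∀ (k : H) (u : K), ((τ k u : K) : V) = ρ k u := fun k u => rfl
  have hlt : Module.finrank ℂ K < n := hn ▸ range_idem_lt σ a h1
  have hpos : 0 < Module.finrank ℂ K := by
    rw [Nat.pos_iff_ne_zero]
    intro h
    rw [Submodule.finrank_eq_zero] at h
    exact h0 (LinearMap.range_eq_bot.mp h)
  obtain ⟨d, f, hd, hdn, hf, ⟨v0, hv0⟩, hsemi⟩ := IH K H τ _ rfl hpos hlt
  let ē : V →ₗ[ℂ] K := e.rangeRestrict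
  have hē : ∀ v, (ē v : V) = e v := fun v => rfl
  have hēK : ∀ u : K, ē u = u := fun u => Subtype.ext (hKfix _ u.2)
  have := Fintype.ofFinite (G ⧸ H)
  let T : G ⧸ H → V →ₗ[ℂ] K := fun c => ē ∘ₗ ρ (c.out)⁻¹
  let S : (G ⧸ H → K) →ₗ[ℂ] V := ∑ c, (ρ c.out ∘ₗ K.subtype) ∘ₗ LinearMap.proj c
  have hS : ∀ w, S w = ∑ c, ρ c.out (w c : V) := fun w => by simp [S]
  have hTS : ∀ w c, T c (S w) = w c := by
    intro w c
    rw [hS, map_sum, Finset.sum_eq_single c]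
    · change ē (ρ c.out⁻¹ (ρ c.out (w c : V))) = w c
      rw [← Module.End.mul_apply, hinv', Module.End.one_apply, hēK]
    · intro c' _ hc'
      apply Subtype.ext
      change e (ρ c.out⁻¹ (ρ c'.out (w c' : V))) = 0
      rw [← hKfix _ (w c').2]
      have h2 := horth c.out c'.out (fun hm => hc' (by
        have := QuotientGroup.eq.mpr hm
        rw [QuotientGroup.out_eq', QuotientGroup.out_eq'] at this
        exact this.symm))
      rw [map_mul] at h2
      exact LinearMap.congr_fun h2 (w c' : V)
    · simp
  have hdim : Fintype.card (G ⧸ H) * Module.finrank ℂ K ≤ n := by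
    have hinj : Function.Injective S := fun w w' h => funext fun c => by rw [← hTS w, h, hTS]
    have := LinearMap.finrank_le_finrank_of_injective hinj
    rw [Module.finrank_pi_fintype, hn] at this
    simpa using this
  have hr : 0 < Fintype.card (G ⧸ H) := Fintype.card_pos
  refine ⟨Fintype.card (G ⧸ H) * d, ∏ c : G ⧸ H, fun v => f (T c v), Nat.mul_pos hr hd, ?_, ?_,
    ⟨S fun _ => v0, ?_⟩, fun h => ?_⟩
  · set r := Fintype.card (G ⧸ H)
    set m := Module.finrank ℂ K
    calc r * d ≤ r * (4 * m ^ 2) := Nat.mul_le_mul_left _ hdn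
      _ ≤ (r * r) * (4 * m ^ 2) := Nat.mul_le_mul_right _ (Nat.le_mul_self r)
      _ = 4 * (r * m) ^ 2 := by ring
      _ ≤ 4 * n ^ 2 := by gcongr
  · exact poly_prod Finset.univ _ d fun c => poly_comp (T c) d f hf
  · rw [Finset.prod_apply, Finset.prod_ne_zero_iff]
    intro c _
    rw [hTS]; exact hv0
  · have hk : ∀ c : G ⧸ H, ∃ k : H, c.out⁻¹ * h = k * ((h⁻¹ • c).out)⁻¹ := by
      intro c
      have h2 : c.out⁻¹ * (h * (h⁻¹ • c).out) ∈ H := by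
        rw [← QuotientGroup.eq, QuotientGroup.out_eq']
        change c = h • (((h⁻¹ • c).out : G) : G ⧸ H)
        rw [QuotientGroup.out_eq', smul_inv_smul]
      exact ⟨⟨_, h2⟩, by simp [mul_assoc]⟩
    choose k hk using hk
    choose χ hχ using hsemi
    refine ⟨∏ c, χ (k c), fun v => ?_⟩
    have h3 : ∀ c, f (T c (ρ h v)) = χ (k c) * f (T (h⁻¹ • c) v) := by
      intro c
      rw [← hχ]
      congr 1
      apply Subtype.ext
      rw [hτ]
      change e (ρ c.out⁻¹ (ρ h v)) = ρ (k c) (e (ρ (h⁻¹ • c).out⁻¹ v))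
      rw [← Module.End.mul_apply (ρ (k c)), (hH _).mp (k c).2, Module.End.mul_apply,
        ← Module.End.mul_apply (ρ c.out⁻¹), ← Module.End.mul_apply (ρ (k c)), ← map_mul, ← map_mul, hk]
    rw [Finset.prod_apply, Finset.prod_apply, Finset.prod_congr rfl fun c _ => h3 c,
      Finset.prod_mul_distrib]
    congr 1
    exact Fintype.prod_equiv (MulAction.toPerm h⁻¹) _ _ fun c => rfl

lemma semi_part2 {p : ℕ} (hp : p.Prime) (hn : Module.finrank ℂ V = n) (hn0 : 0 < n)
    (hinj : Function.Injective ρ)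
    (hdet : ∀ g, LinearMap.det (ρ g) = 1) (hG : p ∣ Nat.card G) (hpn : 2 * n + 1 < p) 
    (IH : ∀ (W : Type) [AddCommGroup W] [Module ℂ W] [FiniteDimensional ℂ W] (H : Type) [Group H]
      [Finite H] (τ : H →* Module.End ℂ W) (m : ℕ), Module.finrank ℂ W = m → 0 < m → m < n → Semi τ m) :
    Semi ρ n := by
  have hcomm : ∀ (x y : G) (i j : ℕ), x ^ p ^ i = 1 → y ^ p ^ j = 1 → x * y = y * x := by
    intro x y i j hx hy
    apply hinj
    rw [map_mul, map_mul]
    exact FT p hp n V G ρ hn hpn x y i j hx hy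
  let P : Subgroup G :=
    { carrier := {x | ∃ i, x ^ p ^ i = 1}
      one_mem' := ⟨0, by simp⟩
      mul_mem' := by
        rintro x y ⟨i, hx⟩ ⟨j, hy⟩
        refine ⟨i + j, ?_⟩
        rw [(show Commute x y from hcomm x y i j hx hy).mul_pow, pow_add, pow_mul, hx, one_pow,
          one_mul, mul_comm, pow_mul, hy, one_pow]
      inv_mem' := by
        rintro x ⟨i, hx⟩
        exact ⟨i, by rw [inv_pow, hx, inv_one]⟩ }
  have hPm : ∀ x, x ∈ P ↔ ∃ i, x ^ p ^ i = 1 := fun x => Iff.rfl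
  have : P.Normal := ⟨by
    rintro x ⟨i, hx⟩ g
    exact ⟨i, by rw [conj_pow, hx, mul_one, mul_inv_cancel]⟩⟩
  letI : CommGroup P := { P.toGroup with
    mul_comm := fun x y => by
      obtain ⟨i, hx⟩ := x.2
      obtain ⟨j, hy⟩ := y.2
      exact Subtype.ext (hcomm _ _ i j hx hy) }
  have := Fintype.ofFinite P
  have : Fact p.Prime := ⟨hp⟩
  obtain ⟨x, hx⟩ := exists_prime_orderOf_dvd_card' p hG
  have hVnt : Nontrivial V := Module.nontrivial_of_finrank_pos (R := ℂ) (by omega)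
  obtain ⟨a, ha⟩ : ∃ a, idem (P := P) (ρ.comp P.subtype) a ≠ 0 := by
    by_contra! hc
    have := sum_idem (P := P) (ρ.comp P.subtype)
    rw [Finset.sum_congr rfl fun a _ => hc a, Finset.sum_const_zero] at this
    exact zero_ne_one this
  refine semi_imprim ρ hn (Q := P) P.subtype (fun g => ⟨MulAut.conjNormal g, fun x => by
    simp [MulAut.conjNormal_apply]⟩) a ha (fun h1 => ?_) IH
  have hxp : x ^ p ^ 1 = 1 := by rw [pow_one, ← hx, pow_orderOf_eq_one]
  have h2 := sig_mul_idem (P := P) (ρ.comp P.subtype) a ⟨x, 1, hxp⟩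
  rw [h1, mul_one] at h2
  set z : ℂ := (a ⟨x, 1, hxp⟩ : ℂ) with hz
  have h2' : ρ x = z • 1 := h2
  have h3 := hdet x
  rw [h2', LinearMap.det_smul, map_one, mul_one, hn] at h3
  have h4 : z ^ p ^ 1 = 1 := by
    rw [hz, ← Units.val_pow_eq_pow_val, ← map_pow]
    have : (⟨x, 1, hxp⟩ : P) ^ p ^ 1 = 1 := Subtype.ext hxp
    rw [this, map_one]; rfl
  have h5 := scalar_p hp hn0 (by omega) z h3 h4
  rw [h5, one_smul] at h2'
  have h6 : x = 1 := hinj (by rw [h2', map_one])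
  rw [h6, orderOf_one] at hx
  exact hp.one_lt.ne hx

end Steps

theorem semi_all (n : ℕ) : ∀ (V : Type) [AddCommGroup V] [Module ℂ V] [FiniteDimensional ℂ V]
    (G : Type) [Group G] [Finite G] (ρ : G →* Module.End ℂ V), Module.finrank ℂ V = n → 0 < n →
    Semi ρ n := by
  induction n using Nat.strong_induction_on with
  | _ n IH =>
    intro V _ _ _ G _ _ ρ hn hn0
    have := detG_finite ρ (by omega)
    apply semi_of_det ρ hn hn0
    obtain ⟨p, hp, h1, h2⟩ := Nat.exists_prime_lt_and_le_two_mul (2 * n + 1) (by omega)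
    have h3 : p ≤ 4 * n + 1 := by
      rcases h2.lt_or_eq with h | h
      · omega
      · have : 2 ∣ p := ⟨2 * n + 1, h⟩
        rw [Nat.prime_dvd_prime_iff_eq Nat.prime_two hp] at this
        omega
    by_cases hG : p ∣ Nat.card (detG ρ)
    · exact semi_part2 (detRep ρ) hp hn hn0 (detRep_inj ρ) (detRep_det ρ) hG h1
        fun W _ _ _ H _ _ τ m hm hm0 hmn => IH m hmn W H τ hm hm0
    · exact semi_part1 (detRep ρ) hp hn hn0 (detRep_det ρ) hG (by omega) h3

end Thompson

/-- Thompson's bound: if `G ≤ GL_n(ℂ)` is a finite subgroup with no non-trivial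
characters (every homomorphism `G → ℂˣ` is trivial), then `G` has a nonzero homogeneous
invariant polynomial of degree `d` with `0 < d ≤ 4n²`. -/
theorem stmt14 {n : ℕ} (hn : 0 < n) (G : Subgroup (GL (Fin n) ℂ))
    (hfin : (G : Set (GL (Fin n) ℂ)).Finite)
    (hchar : ∀ φ : G →* ℂˣ, φ = 1) :
    ∃ d : ℕ, 0 < d ∧ d ≤ 4 * n ^ 2 ∧
      ∃ f : MvPolynomial (Fin n) ℂ, f ≠ 0 ∧ f.IsHomogeneous d ∧
        ∀ g ∈ G, glAct g f = f := by
  have : Finite G := hfin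
  let ρ : G →* Module.End ℂ (Fin n → ℂ) :=
    ((Matrix.toLinAlgEquiv' (R := ℂ) (n := Fin n) : _ →* _).comp
      (Units.coeHom (Matrix (Fin n) (Fin n) ℂ))).comp G.subtype
  have hρ : ∀ (g : G) v, ρ g v = ((g : GL (Fin n) ℂ) : Matrix (Fin n) (Fin n) ℂ) *ᵥ v := by
    intro g v
    exact Matrix.toLinAlgEquiv'_apply _ _
  obtain ⟨d, f, hd, hdn, hf, ⟨v0, hv0⟩, hs⟩ := Thompson.semi_all n (Fin n → ℂ) G ρ (by simp) hn
  obtain ⟨F, hF, hFe⟩ := Thompson.poly_mv d f hf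
  choose χ hχ using hs
  let φ0 : G →* ℂ :=
    { toFun := χ
      map_one' := by
        have := hχ 1 v0
        rw [map_one, Module.End.one_apply] at this
        exact mul_right_cancel₀ hv0 (by rw [← this, one_mul])
      map_mul' := fun g h => by
        have h1 := hχ (g * h) v0
        rw [map_mul, Module.End.mul_apply, hχ, hχ, ← mul_assoc] at h1
        exact mul_right_cancel₀ hv0 h1.symm }
  have hφ := hchar φ0.toHomUnits
  have h1 : ∀ g, χ g = 1 := fun g => by
    have := congrArg Units.val (DFunLike.congr_fun hφ g)
    exact this
  refine ⟨d, hd, hdn, F, ?_, hF, fun g hg => ?_⟩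
  · rintro rfl
    exact hv0 (by rw [← hFe, map_zero])
  · apply MvPolynomial.funext
    intro v
    have h2 := hχ (⟨g, hg⟩⁻¹ : G) v
    rw [h1, one_mul, ← hFe, ← hFe, hρ] at h2
    rw [← h2, glAct, MvPolynomial.aeval_def, MvPolynomial.eval₂_eq', map_sum, MvPolynomial.eval_eq']
    refine Finset.sum_congr rfl fun s _ => ?_
    rw [map_mul, map_prod, MvPolynomial.algebraMap_eq, eval_C]
    congr 1
    refine Finset.prod_congr rfl fun i _ => ?_
    rw [map_pow, map_sum]
    congr 1
    refine Finset.sum_congr rfl fun j _ => ?_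
    rw [smul_eval, eval_X]
    rfl
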